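/- arXiv:2404.05864 — 6 statements merged into one kernel-verified Lean document; each statement's English description precedes it below -/
import Mathlib

section
/- There exists an absolute constant C > 0 such that the following holds for every odd integer r ≥ 5, all integers n ≥ 3, k ≥ 1, and all δ ∈ (0,1): if there exists a binary linear (r,δ)-LCC of block length n and dimension k, then k ≤ C · δ^{-2} · n^{1 - 2/(r-1)} · (log₂ n)³. -/
/-- A binary linear `(r, δ)`-LCC of block length `n` and dimension `k`:
a full-rank matrix whose rows `v 1, …, v n ∈ F₂ᵏ` span `F₂ᵏ`, together with
`r`-uniform matchings `H i` over `[n]` of size at least `δ·n`, such that each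
hyperedge `{a₁,…,a_r} ∈ H i` satisfies `v i = v a₁ + ⋯ + v a_r`. -/
def IsBinaryLCC (r : ℕ) (δ : ℝ) {n k : ℕ} (v : Fin n → Fin k → ZMod 2)
    (H : Fin n → Finset (Finset (Fin n))) : Prop :=
  Submodule.span (ZMod 2) (Set.range v) = ⊤ ∧
  (∀ i : Fin n, ∀ e ∈ H i, e.card = r) ∧
  (∀ i : Fin n, ∀ e ∈ H i, ∀ e' ∈ H i, e ≠ e' → Disjoint e e') ∧
  (∀ i : Fin n, δ * n ≤ ((H i).card : ℝ)) ∧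
  (∀ i : Fin n, ∀ e ∈ H i, v i = ∑ a ∈ e, v a)

open Finset in
lemma sum_up {T : Type*} [Fintype T] [DecidableEq T] (A : Finset T → ℝ) (m : ℕ) :
    ∑ W ∈ powersetCard m (univ : Finset T), ∑ c ∈ Wᶜ, A (insert c W)
      = (m + 1 : ℕ) * ∑ W ∈ powersetCard (m + 1) (univ : Finset T), A W := by
  have h : (m + 1 : ℕ) * ∑ W ∈ powersetCard (m + 1) (univ : Finset T), A W
      = ∑ W ∈ powersetCard (m + 1) (univ : Finset T), ∑ c ∈ W, A W := by
    rw [mul_sum]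
    refine sum_congr rfl fun W hW => ?_
    rw [sum_const, (mem_powersetCard.1 hW).2, nsmul_eq_mul]
  rw [h, sum_sigma', sum_sigma']
  refine sum_bij' (fun x _ => ⟨insert x.2 x.1, x.2⟩) (fun x _ => ⟨x.1.erase x.2, x.2⟩) ?_ ?_ ?_ ?_ ?_
  · rintro ⟨W, c⟩ hx
    simp only [mem_sigma, mem_powersetCard, mem_compl] at hx ⊢
    refine ⟨⟨subset_univ _, ?_⟩, mem_insert_self _ _⟩
    rw [card_insert_of_notMem hx.2, hx.1.2]
  · rintro ⟨W, c⟩ hx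
    simp only [mem_sigma, mem_powersetCard, mem_compl] at hx ⊢
    refine ⟨⟨subset_univ _, ?_⟩, notMem_erase _ _⟩
    rw [card_erase_of_mem hx.2, hx.1.2]; rfl
  · rintro ⟨W, c⟩ hx
    simp only [mem_sigma, mem_powersetCard, mem_compl] at hx
    simp [erase_insert hx.2]
  · rintro ⟨W, c⟩ hx
    simp only [mem_sigma, mem_powersetCard, mem_compl] at hx
    simp [insert_erase hx.2]
  · rintro ⟨W, c⟩ hx
    rfl

open Finset in
lemma sum_down {T : Type*} [Fintype T] [DecidableEq T] (A : Finset T → ℝ) (m : ℕ)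
    (hm : m + 1 ≤ Fintype.card T) :
    ∑ W ∈ powersetCard (m + 1) (univ : Finset T), ∑ c ∈ W, A (W.erase c)
      = ((Fintype.card T - m : ℕ) : ℝ) * ∑ W ∈ powersetCard m (univ : Finset T), A W := by
  have h : ((Fintype.card T - m : ℕ) : ℝ) * ∑ W ∈ powersetCard m (univ : Finset T), A W
      = ∑ W ∈ powersetCard m (univ : Finset T), ∑ c ∈ Wᶜ, A W := by
    rw [mul_sum]
    refine sum_congr rfl fun W hW => ?_
    rw [sum_const, card_compl, (mem_powersetCard.1 hW).2, nsmul_eq_mul]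
  rw [h, sum_sigma', sum_sigma']
  symm
  refine sum_bij' (fun x _ => ⟨insert x.2 x.1, x.2⟩) (fun x _ => ⟨x.1.erase x.2, x.2⟩) ?_ ?_ ?_ ?_ ?_
  · rintro ⟨W, c⟩ hx
    simp only [mem_sigma, mem_powersetCard, mem_compl] at hx ⊢
    refine ⟨⟨subset_univ _, ?_⟩, mem_insert_self _ _⟩
    rw [card_insert_of_notMem hx.2, hx.1.2]
  · rintro ⟨W, c⟩ hx
    simp only [mem_sigma, mem_powersetCard, mem_compl] at hx ⊢
    refine ⟨⟨subset_univ _, ?_⟩, notMem_erase _ _⟩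
    rw [card_erase_of_mem hx.2, hx.1.2]; rfl
  · rintro ⟨W, c⟩ hx
    simp only [mem_sigma, mem_powersetCard, mem_compl] at hx
    simp [erase_insert hx.2]
  · rintro ⟨W, c⟩ hx
    simp only [mem_sigma, mem_powersetCard, mem_compl] at hx
    simp [insert_erase hx.2]
  · rintro ⟨W, c⟩ hx
    simp only [mem_sigma, mem_powersetCard, mem_compl] at hx
    simp [erase_insert hx.2]

open Finset in
/-- Averaging over nested random colour sets. -/
lemma averaging {T : Type*} [Fintype T] [DecidableEq T] (j : ℕ) (hj : 1 ≤ j)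
    (hT : Fintype.card T = 4 * j) (A : Finset T → ℝ) (φ L : ℝ) (hφ : 0 ≤ φ)
    (hA0 : ∀ W, 0 ≤ A W) (hAm : ∀ W c, A (insert c W) ≤ A W)
    (hA : ∀ W, φ / 2 * A W ≤ ∑ c ∈ Wᶜ, (A W - A (insert c W)) + ∑ c ∈ W, (A (W.erase c) - A W))
    (hL : A ∅ ≤ L) (hbig : 8 * L < (1 + φ / (8 * j)) ^ j) :
    ∃ W, A W + A Wᶜ < 1 / 4 := by
  set t := 4 * j with ht
  set S : ℕ → ℝ := fun m => ∑ W ∈ powersetCard m (univ : Finset T), A W with hS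
  set H : ℕ → ℝ := fun m => S m / (t.choose m : ℝ) with hH
  have hcpos : ∀ m, m ≤ t → (0 : ℝ) < t.choose m := fun m hm => by
    exact_mod_cast Nat.choose_pos hm
  have hSH : ∀ m, m ≤ t → S m = t.choose m * H m := fun m hm => by
    simp only [hH]; field_simp [(hcpos m hm).ne']
  have hS0 : ∀ m, 0 ≤ S m := fun m => sum_nonneg fun W _ => hA0 W
  have hH0 : ∀ m, 0 ≤ H m := fun m => div_nonneg (hS0 m) (Nat.cast_nonneg _)
  have hch : ∀ m, m + 1 ≤ t → ((m : ℝ) + 1) * t.choose (m + 1) = (t - m) * t.choose m := by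
    intro m hm
    have := Nat.choose_succ_right_eq t m
    have h2 : ((t.choose (m+1) * (m+1) : ℕ) : ℝ) = ((t.choose m * (t - m) : ℕ) : ℝ) := by rw [this]
    push_cast [Nat.cast_sub (show m ≤ t by omega)] at h2
    linarith
  -- monotone
  have hmono : ∀ m, m + 1 ≤ t → H (m + 1) ≤ H m := by
    intro m hm
    have h1 : ∑ W ∈ powersetCard m (univ : Finset T), ∑ c ∈ Wᶜ, A (insert c W)
        ≤ ∑ W ∈ powersetCard m (univ : Finset T), ((t : ℝ) - m) * A W := by
      refine sum_le_sum fun W hW => ?_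
      refine (sum_le_sum fun c _ => hAm W c).trans ?_
      rw [sum_const, card_compl, (mem_powersetCard.1 hW).2, nsmul_eq_mul, hT,
        Nat.cast_sub (by omega)]
    rw [sum_up, ← mul_sum] at h1
    change ((m + 1 : ℕ) : ℝ) * S (m + 1) ≤ (t - m) * S m at h1
    rw [hSH _ hm, hSH m (by omega)] at h1
    push_cast at h1
    have h3 : ((t : ℝ) - m) * t.choose m * H (m + 1) ≤ (t - m) * t.choose m * H m := by
      have := hch m hm
      calc _ = ((m : ℝ) + 1) * t.choose (m + 1) * H (m + 1) := by rw [this]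
        _ ≤ _ := by linarith
    have h4 : 0 < ((t : ℝ) - m) * t.choose m := by
      apply mul_pos _ (hcpos m (by omega))
      have : ((m + 1 : ℕ) : ℝ) ≤ t := by exact_mod_cast hm
      push_cast at this; linarith
    exact le_of_mul_le_mul_left h3 h4
  have hstep : ∀ m, m + 2 ≤ t → H (m + 2) * (1 + φ / (8 * j)) ≤ H m := by
    intro m hm
    have h1 : ∑ W ∈ powersetCard (m + 1) (univ : Finset T), φ / 2 * A W ≤
        ∑ W ∈ powersetCard (m + 1) (univ : Finset T), (((t : ℝ) - (m + 1)) * A W -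
          ∑ c ∈ Wᶜ, A (insert c W) + (∑ c ∈ W, A (W.erase c) - (m + 1) * A W)) := by
      refine sum_le_sum fun W hW => (hA W).trans (le_of_eq ?_)
      rw [sum_sub_distrib, sum_sub_distrib, sum_const, sum_const, card_compl,
        (mem_powersetCard.1 hW).2, nsmul_eq_mul, nsmul_eq_mul, hT, Nat.cast_sub (by omega)]
      push_cast; ring
    rw [sum_add_distrib, sum_sub_distrib, sum_sub_distrib, sum_up, sum_down _ _ (by omega),
      ← mul_sum, ← mul_sum, ← mul_sum, hT, Nat.cast_sub (by omega)] at h1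
    change φ / 2 * S (m + 1) ≤ ((t : ℝ) - (m + 1)) * S (m + 1) - ((m + 1 + 1 : ℕ) : ℝ) * S (m + 2)
      + (((t : ℝ) - m) * S m - (m + 1) * S (m + 1)) at h1
    rw [hSH m (by omega), hSH (m + 1) (by omega), hSH (m + 2) (by omega)] at h1
    have e1 := hch m (by omega)
    have e2 := hch (m + 1) (by omega)
    push_cast at h1 e2
    set K : ℝ := ((t.choose (m + 1) : ℕ) : ℝ) with hK
    have hKpos : 0 < K := hcpos _ (by omega)
    have h2 : K * (φ / 2 * H (m + 1)) ≤ K * (((t : ℝ) - (m + 1)) * (H (m + 1) - H (m + 2))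
        + (m + 1) * (H m - H (m + 1))) := by
      have e1' : ((t : ℝ) - m) * (t.choose m * H m) = (m + 1) * K * H m := by rw [e1]; ring
      have e2' : ((m : ℝ) + 1 + 1) * (t.choose (m + 2) * H (m + 2)) = (t - (m + 1)) * K * H (m + 2) := by
        rw [← e2]; ring
      rw [e1', e2'] at h1
      nlinarith [h1]
    have h3 := le_of_mul_le_mul_left h2 hKpos
    have m1 := hmono m (by omega)
    have m2 := hmono (m + 1) (by omega)
    change H (m + 2) ≤ H (m + 1) at m2
    have hmt : (m : ℝ) + 2 ≤ t := by exact_mod_cast hm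
    have hm0 : (0 : ℝ) ≤ m := Nat.cast_nonneg m
    have h4 : φ / 2 * H (m + 2) ≤ t * (H m - H (m + 2)) := by
      have a1 : φ / 2 * H (m + 2) ≤ φ / 2 * H (m + 1) := by gcongr
      have a2 : ((t : ℝ) - (m + 1)) * (H (m + 1) - H (m + 2)) ≤ t * (H (m + 1) - H (m + 2)) := by
        apply mul_le_mul_of_nonneg_right <;> linarith
      have a3 : ((m : ℝ) + 1) * (H m - H (m + 1)) ≤ t * (H m - H (m + 1)) := by
        apply mul_le_mul_of_nonneg_right <;> linarith
      nlinarith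
    have htj : (t : ℝ) = 4 * j := by rw [ht]; push_cast; ring
    have hj' : (0 : ℝ) < j := by exact_mod_cast hj
    rw [htj] at h4
    have : H (m + 2) * (φ / (8 * j)) ≤ H m - H (m + 2) := by
      rw [mul_div_assoc', div_le_iff₀ (by positivity)]
      nlinarith
    nlinarith
  have hiter : ∀ i, 2 * i ≤ t → H (2 * i) * (1 + φ / (8 * j)) ^ i ≤ L := by
    intro i
    induction i with
    | zero =>
      intro _
      simp [hH, hS]
      simpa using hL
    | succ i ih =>
      intro hi
      have h1 := ih (by omega)
      have h2 := hstep (2 * i) (by omega)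
      have h3 : 0 ≤ (1 + φ / (8 * j)) ^ i := by positivity
      rw [pow_succ]
      calc H (2 * (i + 1)) * ((1 + φ / (8 * j)) ^ i * (1 + φ / (8 * j)))
          = (H (2 * i + 2) * (1 + φ / (8 * j))) * (1 + φ / (8 * j)) ^ i := by
            rw [show 2 * (i + 1) = 2 * i + 2 by ring]; ring
        _ ≤ H (2 * i) * (1 + φ / (8 * j)) ^ i := by gcongr
        _ ≤ L := h1
  have hfin := hiter j (by omega)
  have hH8 : H (2 * j) < 1 / 8 := by
    by_contra hcon
    push Not at hcon
    have hp : 0 ≤ (1 + φ / (8 * j)) ^ j := by positivity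
    nlinarith
  by_contra hcon
  push Not at hcon
  have hsum : ∑ W ∈ powersetCard (2 * j) (univ : Finset T), A Wᶜ = S (2 * j) := by
    simp only [hS]
    refine sum_bij' (fun W _ => Wᶜ) (fun W _ => Wᶜ) ?_ ?_ ?_ ?_ ?_
    · intro W hW
      simp only [mem_powersetCard, card_compl] at hW ⊢
      exact ⟨subset_univ _, by omega⟩
    · intro W hW
      simp only [mem_powersetCard, card_compl] at hW ⊢
      exact ⟨subset_univ _, by omega⟩
    · intro W _; simp
    · intro W _; simp
    · intro W _; rfl
  have h5 : ∑ W ∈ powersetCard (2 * j) (univ : Finset T), (1 / 4 : ℝ) ≤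
      ∑ W ∈ powersetCard (2 * j) (univ : Finset T), (A W + A Wᶜ) :=
    sum_le_sum fun W _ => hcon W
  rw [sum_add_distrib, hsum, sum_const, card_powersetCard, card_univ, hT, nsmul_eq_mul] at h5
  change _ ≤ S (2 * j) + S (2 * j) at h5
  rw [hSH _ (by omega)] at h5
  have := hcpos (2 * j) (by omega)
  nlinarith

/-- number of (ordered) coloured edges from `X` to `Y` -/
noncomputable def cntE {T V : Type*} [Fintype T] [DecidableEq V] (E : T → Finset (V × V))
    (X Y : Finset V) : ℕ :=
  ∑ c, ((E c).filter (fun p => p.1 ∈ X ∧ p.2 ∈ Y)).card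

open Finset in
lemma cntE_split {T V : Type*} [Fintype T] [DecidableEq V] (E : T → Finset (V × V))
    (hsym : ∀ c y z, (y, z) ∈ E c → (z, y) ∈ E c) (X U : Finset V) (hU : U ⊆ X) :
    cntE E X X = cntE E U U + cntE E (X \ U) (X \ U) + 2 * cntE E U (X \ U) := by
  unfold cntE
  rw [mul_sum, ← sum_add_distrib, ← sum_add_distrib]
  refine sum_congr rfl fun c _ => ?_
  have h1 : ((E c).filter (fun p => p.1 ∈ X \ U ∧ p.2 ∈ U)).card
      = ((E c).filter (fun p => p.1 ∈ U ∧ p.2 ∈ X \ U)).card := by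
    refine card_bij' (fun p _ => p.swap) (fun p _ => p.swap) ?_ ?_ ?_ ?_
    · rintro ⟨y, z⟩ h
      simp only [mem_filter, Prod.fst_swap, Prod.snd_swap] at h ⊢
      exact ⟨hsym _ _ _ h.1, h.2.2, h.2.1⟩
    · rintro ⟨y, z⟩ h
      simp only [mem_filter, Prod.fst_swap, Prod.snd_swap] at h ⊢
      exact ⟨hsym _ _ _ h.1, h.2.2, h.2.1⟩
    · intro p _; simp
    · intro p _; simp
  have h2 : ((E c).filter (fun p => p.1 ∈ X ∧ p.2 ∈ X)).card =
      ((E c).filter (fun p => p.1 ∈ U ∧ p.2 ∈ U)).card +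
      ((E c).filter (fun p => p.1 ∈ X \ U ∧ p.2 ∈ X \ U)).card +
      (((E c).filter (fun p => p.1 ∈ U ∧ p.2 ∈ X \ U)).card +
      ((E c).filter (fun p => p.1 ∈ X \ U ∧ p.2 ∈ U)).card) := by
    simp only [card_filter]
    rw [← sum_add_distrib, ← sum_add_distrib, ← sum_add_distrib]
    refine sum_congr rfl fun p _ => ?_
    have a1 : p.1 ∈ U → p.1 ∈ X := fun h => hU h
    have a2 : p.2 ∈ U → p.2 ∈ X := fun h => hU h
    by_cases b1 : p.1 ∈ U <;> by_cases b2 : p.2 ∈ U <;> by_cases b3 : p.1 ∈ X <;>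
      by_cases b4 : p.2 ∈ X <;> simp_all
  rw [h2, h1]; ring

open Finset in
/-- Passing to an expanding vertex subset. -/
lemma expander {T V : Type*} [Fintype T] [Fintype V] [DecidableEq V] (E : T → Finset (V × V))
    (hsym : ∀ c y z, (y, z) ∈ E c → (z, y) ∈ E c) 
    (φ : ℝ) (hφ : 0 ≤ φ) 
    (hdense : 2 * φ * (Fintype.card V : ℝ) * Real.log (Fintype.card V) < ∑ c, ((E c).card : ℝ)) :
    ∃ X : Finset V, (X.Nonempty) ∧ (0 : ℝ) < cntE E X X ∧
      ∀ U ⊆ X, U.Nonempty →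
        φ * U.card * (Real.log X.card - Real.log U.card) ≤ cntE E U (X \ U) := by
  classical
  set good : Finset (Finset V) := univ.filter
    (fun X => 2 * φ * (X.card : ℝ) * Real.log X.card < cntE E X X) with hgood
  have hne : good.Nonempty := by
    refine ⟨univ, ?_⟩
    simp only [hgood, mem_filter, mem_univ, true_and]
    refine lt_of_lt_of_eq hdense ?_
    simp [cntE]
  obtain ⟨X, hX, hmin⟩ := exists_min_image good card hne
  have hX' : 2 * φ * (X.card : ℝ) * Real.log X.card < cntE E X X := by
    simpa [hgood] using hX
  have hsmall : ∀ U : Finset V, U.card < X.card →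
      (cntE E U U : ℝ) ≤ 2 * φ * (U.card : ℝ) * Real.log U.card := by
    intro U hU
    by_contra hcon
    push Not at hcon
    have := hmin U (by simpa [hgood] using hcon)
    omega
  have hlog : ∀ m : ℕ, 0 ≤ Real.log m := fun m => Real.log_natCast_nonneg m
  refine ⟨X, ?_, ?_, ?_⟩
  · rw [nonempty_iff_ne_empty]
    rintro rfl
    simp [cntE] at hX'
  · refine lt_of_le_of_lt ?_ hX'
    have := hlog X.card
    positivity
  · intro U hU hUne
    by_cases hUX : U = X
    · subst hUX
      simp
    have hss : U ⊂ X := lt_of_le_of_ne hU hUX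
    have hc1 : U.card < X.card := card_lt_card hss
    have hUpos : 0 < U.card := hUne.card_pos
    have hcd : (X \ U).card = X.card - U.card := card_sdiff_of_subset hU
    have hc2 : (X \ U).card < X.card := by omega
    have s1 := hsmall U hc1
    have s2 := hsmall (X \ U) hc2
    have sp := cntE_split E hsym X U hU
    have sp' : (cntE E X X : ℝ) = cntE E U U + cntE E (X \ U) (X \ U) + 2 * cntE E U (X \ U) := by
      exact_mod_cast sp
    have hcd' : ((X \ U).card : ℝ) = X.card - U.card := by
      rw [hcd, Nat.cast_sub hc1.le]
    have hle : Real.log ((X \ U).card) ≤ Real.log X.card := by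
      apply Real.log_le_log
      · have : 0 < (X \ U).card := by omega
        exact_mod_cast this
      · exact_mod_cast hc2.le
    have : φ * ((X \ U).card : ℝ) * Real.log ((X \ U).card) ≤ φ * ((X.card : ℝ) - U.card) * Real.log X.card := by
      rw [← hcd']
      gcongr
    nlinarith

set_option maxHeartbeats 1000000 in
open Finset in
/-- Rainbow closed walks in dense properly edge-coloured (multi)graphs. -/
lemma rainbow {T V : Type*} [Fintype T] [DecidableEq T] [Fintype V] [DecidableEq V]
    (E : T → Finset (V × V))
    (hsym : ∀ c y z, (y, z) ∈ E c → (z, y) ∈ E c)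
    (hfun : ∀ c y z z', (y, z) ∈ E c → (y, z') ∈ E c → z = z')
    (hirr : ∀ c y, (y, y) ∉ E c)
    (j : ℕ) (hj : 1 ≤ j) (hT : Fintype.card T = 4 * j) (φ : ℝ) (hφ : 0 ≤ φ)
    (hdense : 2 * φ * (Fintype.card V : ℝ) * Real.log (Fintype.card V) < ∑ c, ((E c).card : ℝ))
    (hbig : 8 * Real.log (Fintype.card V) < (1 + φ / (8 * j)) ^ j)
    (P : V → Finset T → V → Prop) (hstart : ∀ u, P u ∅ u)
    (hmono : ∀ u W W' y, W ⊆ W' → P u W y → P u W' y)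
    (hstep : ∀ u W c y z, P u W y → c ∉ W → (y, z) ∈ E c → P u (insert c W) z) :
    ∃ u w W, w ≠ u ∧ P u W w ∧ P u Wᶜ w := by
  classical
  obtain ⟨X, hXne, hXpos, hexp⟩ := expander E hsym φ hφ hdense
  obtain ⟨u, hu⟩ := hXne
  set Y : Finset T → Finset V := fun W => X.filter (fun y => P u W y) with hY
  have hYX : ∀ W, Y W ⊆ X := fun W => filter_subset _ _
  have huY : ∀ W, u ∈ Y W := fun W => by
    simp only [hY, mem_filter]
    exact ⟨hu, hmono u ∅ W u (empty_subset _) (hstart u)⟩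
  have hYpos : ∀ W, (0 : ℝ) < (Y W).card := fun W => by
    exact_mod_cast card_pos.2 ⟨u, huY W⟩
  have hYmono : ∀ W W', W ⊆ W' → Y W ⊆ Y W' := by
    intro W W' h y hy
    simp only [hY, mem_filter] at hy ⊢
    exact ⟨hy.1, hmono _ _ _ _ h hy.2⟩
  have hinj : ∀ c y y' z, (y, z) ∈ E c → (y', z) ∈ E c → y = y' := fun c y y' z h h' =>
    hfun c z y y' (hsym _ _ _ h) (hsym _ _ _ h')
  set B : Finset T → T → Finset (V × V) := fun W c =>
    (E c).filter (fun p => p.1 ∈ Y W ∧ p.2 ∈ X \ Y W) with hB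
  have hBfst : ∀ W c, ((B W c).image Prod.fst).card = (B W c).card := by
    intro W c
    apply card_image_of_injOn
    rintro ⟨y, z⟩ h ⟨y', z'⟩ h' heq
    simp only [hB, coe_filter, Set.mem_setOf_eq] at h h' heq
    subst heq
    rw [hfun c y z z' h.1 h'.1]
  have hBsnd : ∀ W c, ((B W c).image Prod.snd).card = (B W c).card := by
    intro W c
    apply card_image_of_injOn
    rintro ⟨y, z⟩ h ⟨y', z'⟩ h' heq
    simp only [hB, coe_filter, Set.mem_setOf_eq] at h h' heq
    subst heq
    rw [hinj c y y' z h.1 h'.1]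
  have hBle : ∀ W c, (B W c).card ≤ (Y W).card := by
    intro W c
    rw [← hBfst]
    apply card_le_card
    intro y hy
    simp only [hB, mem_image, mem_filter] at hy
    obtain ⟨p, hp, rfl⟩ := hy
    exact hp.2.1
  have hup : ∀ W c, c ∉ W → (Y W).card + (B W c).card ≤ (Y (insert c W)).card := by
    intro W c hc
    rw [← hBsnd, ← card_union_of_disjoint]
    · apply card_le_card
      apply union_subset (hYmono _ _ (subset_insert _ _))
      intro z hz
      simp only [hB, mem_image, mem_filter] at hz
      obtain ⟨⟨y, z'⟩, hp, rfl⟩ := hz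
      simp only [mem_sdiff] at hp
      simp only [hY, mem_filter] at hp ⊢
      exact ⟨hp.2.2.1, hstep u W c y z' hp.2.1.2 hc hp.1⟩
    · rw [disjoint_left]
      intro z hz hz'
      simp only [hB, mem_image, mem_filter] at hz'
      obtain ⟨p, hp, rfl⟩ := hz'
      exact (mem_sdiff.1 hp.2.2).2 hz
  have hdown : ∀ W c, c ∈ W → (Y (W.erase c)).card + (B W c).card ≤ (Y W).card := by
    intro W c hc
    rw [← hBfst, ← card_union_of_disjoint]
    · apply card_le_card
      apply union_subset (hYmono _ _ (erase_subset _ _))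
      intro z hz
      simp only [hB, mem_image, mem_filter] at hz
      obtain ⟨p, hp, rfl⟩ := hz
      exact hp.2.1
    · rw [disjoint_left]
      intro y hy hy'
      simp only [hB, mem_image, mem_filter] at hy'
      obtain ⟨⟨y', z⟩, hp, rfl⟩ := hy'
      have h1 := mem_sdiff.1 hp.2.2
      apply h1.2
      simp only [hY, mem_filter] at hy ⊢
      refine ⟨h1.1, ?_⟩
      have := hstep u _ c _ z hy.2 (notMem_erase c W) hp.1
      rwa [insert_erase hc] at this
  set A : Finset T → ℝ := fun W => Real.log X.card - Real.log (Y W).card with hA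
  have hXc : (0 : ℝ) < X.card := by exact_mod_cast card_pos.2 ⟨u, hu⟩
  have hlogmono : ∀ W W', W ⊆ W' → Real.log (Y W).card ≤ Real.log (Y W').card := by
    intro W W' h
    apply Real.log_le_log (hYpos _)
    exact_mod_cast card_le_card (hYmono _ _ h)
  have key : ∃ W, A W + A Wᶜ < 1 / 4 := by
    refine averaging j hj hT A φ (Real.log (Fintype.card V)) hφ ?_ ?_ ?_ ?_ hbig
    · intro W
      simp only [hA, sub_nonneg]
      apply Real.log_le_log (hYpos _)
      exact_mod_cast card_le_card (hYX W)
    · intro W c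
      have := hlogmono W (insert c W) (subset_insert _ _)
      simp only [hA]; linarith
    · intro W
      have e := hexp (Y W) (hYX W) ⟨u, huY W⟩
      have hcn : (cntE E (Y W) (X \ Y W) : ℝ) = ∑ c, ((B W c).card : ℝ) := by
        unfold cntE
        push_cast
        rfl
      rw [hcn] at e
      have hy := hYpos W
      have e1 : φ / 2 * A W ≤ ∑ c, ((B W c).card : ℝ) / (2 * (Y W).card) := by
        rw [← sum_div, le_div_iff₀ (by positivity)]
        simp only [hA]
        linarith
      refine e1.trans ?_
      rw [← sum_compl_add_sum W]
      apply add_le_add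
      · refine sum_le_sum fun c hc => ?_
        have h1 : ((Y W).card : ℝ) + (B W c).card ≤ (Y (insert c W)).card := by
          exact_mod_cast hup W c (mem_compl.1 hc)
        have h2 : ((B W c).card : ℝ) ≤ (Y W).card := by exact_mod_cast hBle W c
        simp only [hA]
        have h3 : 1 - (((Y (insert c W)).card : ℝ) / (Y W).card)⁻¹ ≤
            Real.log ((Y (insert c W)).card / (Y W).card) :=
          Real.one_sub_inv_le_log_of_pos (div_pos (hYpos _) (hYpos _))
        rw [Real.log_div (hYpos _).ne' (hYpos _).ne', inv_div] at h3
        have h4 : ((B W c).card : ℝ) / (2 * (Y W).card) ≤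
            1 - ((Y W).card : ℝ) / (Y (insert c W)).card := by
          have hq := hYpos (insert c W)
          rw [div_le_iff₀ (by positivity), sub_mul, div_mul_eq_mul_div, le_sub_iff_add_le,
            ← le_sub_iff_add_le', div_le_iff₀ hq]
          have h0 : (0 : ℝ) ≤ (B W c).card := Nat.cast_nonneg _
          nlinarith
        linarith
      · refine sum_le_sum fun c hc => ?_
        have h1 : ((Y (W.erase c)).card : ℝ) + (B W c).card ≤ (Y W).card := by
          exact_mod_cast hdown W c hc
        simp only [hA]
        have h3 : 1 - (((Y W).card : ℝ) / (Y (W.erase c)).card)⁻¹ ≤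
            Real.log ((Y W).card / (Y (W.erase c)).card) :=
          Real.one_sub_inv_le_log_of_pos (div_pos (hYpos _) (hYpos _))
        rw [Real.log_div (hYpos _).ne' (hYpos _).ne', inv_div] at h3
        have h4 : ((B W c).card : ℝ) / (2 * (Y W).card) ≤
            1 - ((Y (W.erase c)).card : ℝ) / (Y W).card := by
          have h0 : (0 : ℝ) ≤ (B W c).card := Nat.cast_nonneg _
          rw [div_le_iff₀ (by positivity), sub_mul, div_mul_eq_mul_div, le_sub_iff_add_le,
            ← le_sub_iff_add_le', div_le_iff₀ hy]
          nlinarith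
        linarith
    · simp only [hA]
      have h1 : 0 ≤ Real.log ((Y ∅).card) := Real.log_natCast_nonneg _
      have h2 : Real.log X.card ≤ Real.log (Fintype.card V) := by
        apply Real.log_le_log hXc
        exact_mod_cast card_le_univ X
      linarith
  obtain ⟨W, hW⟩ := key
  have hAn : ∀ W, 0 ≤ A W := fun W => by
    simp only [hA, sub_nonneg]
    apply Real.log_le_log (hYpos _)
    exact_mod_cast card_le_card (hYX W)
  have hbigY : ∀ W, A W < 1 / 4 → 3 * (X.card : ℝ) < 4 * (Y W).card := by
    intro W h
    simp only [hA] at h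
    rw [← Real.log_div hXc.ne' (hYpos W).ne'] at h
    by_contra hcon
    push Not at hcon
    have h1 : (4 / 3 : ℝ) ≤ X.card / (Y W).card := by
      rw [le_div_iff₀ (hYpos W)]; linarith
    have h2 : 1 - (4 / 3 : ℝ)⁻¹ ≤ Real.log (4 / 3) := Real.one_sub_inv_le_log_of_pos (by norm_num)
    have h3 : Real.log (4 / 3) ≤ Real.log (X.card / (Y W).card) :=
      Real.log_le_log (by norm_num) h1
    norm_num at h2
    linarith
  have b1 := hbigY W (by linarith [hAn Wᶜ])
  have b2 := hbigY Wᶜ (by linarith [hAn W])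
  have hX2 : 2 ≤ X.card := by
    by_contra hlt
    have hX1 : X.card = 1 := by
      have := card_pos.2 ⟨u, hu⟩
      omega
    obtain ⟨a, rfl⟩ := card_eq_one.1 hX1
    have : cntE E {a} {a} = 0 := by
      unfold cntE
      apply sum_eq_zero
      intro c _
      rw [card_eq_zero, filter_eq_empty_iff]
      rintro ⟨y, z⟩ hp ⟨h1, h2⟩
      simp only [mem_singleton] at h1 h2
      subst h1; subst h2
      exact hirr _ _ hp
    rw [this] at hXpos
    simp at hXpos
  have hi : (Y W ∪ Y Wᶜ).card + (Y W ∩ Y Wᶜ).card = (Y W).card + (Y Wᶜ).card :=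
    card_union_add_card_inter _ _
  have hun : (Y W ∪ Y Wᶜ).card ≤ X.card := card_le_card (union_subset (hYX _) (hYX _))
  have b1' : 3 * X.card < 4 * (Y W).card := by exact_mod_cast b1
  have b2' : 3 * X.card < 4 * (Y Wᶜ).card := by exact_mod_cast b2
  have hinter : 1 < (Y W ∩ Y Wᶜ).card := by omega
  obtain ⟨w, hw, hwu⟩ := exists_mem_ne hinter u
  simp only [hY, mem_inter, mem_filter] at hw
  exact ⟨u, w, W, hwu, hw.1.2, hw.2.2⟩

open Finset in
/-- Extracting a large partial matching from a family of partial injections. -/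
lemma extract_matching {F ι : Type*} [DecidableEq F] [Fintype ι] [DecidableEq ι]
    (L R : ι → Finset F) (mv : ι → F → F) (hinj : ∀ i, Function.Injective (mv i))
    (hmv : ∀ i y, y ∈ L i → mv i y ∈ R i) (lo κ : ℝ)
    (hlo : ∀ i, lo ≤ (L i).card) (hκ : 0 ≤ κ)
    (hL : ∀ i i', i ≠ i' → ((L i ∩ L i').card : ℝ) ≤ κ)
    (hR : ∀ i i', i ≠ i' → ((R i ∩ R i').card : ℝ) ≤ κ) :
    ∃ G : Finset (F × F), (∀ y z, (y, z) ∈ G → ∃ i, y ∈ L i ∧ z = mv i y) ∧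
      (∀ y z z', (y, z) ∈ G → (y, z') ∈ G → z = z') ∧
      (∀ y y' z, (y, z) ∈ G → (y', z) ∈ G → y = y') ∧
      (Fintype.card ι : ℝ) * (lo - 2 * Fintype.card ι * κ) ≤ G.card := by
  set good : ι → Finset F := fun i => (L i).filter
    (fun y => ∀ i', i' ≠ i → y ∉ L i' ∧ mv i y ∉ R i') with hgood
  set G : Finset (F × F) := univ.biUnion (fun i => (good i).image (fun y => (y, mv i y))) with hG
  have hmem : ∀ y z, (y, z) ∈ G ↔ ∃ i, y ∈ good i ∧ z = mv i y := by
    intro y z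
    simp only [hG, mem_biUnion, mem_univ, true_and, mem_image, Prod.mk.injEq]
    constructor
    · rintro ⟨i, y', h, rfl, rfl⟩; exact ⟨i, h, rfl⟩
    · rintro ⟨i, h, rfl⟩; exact ⟨i, y, h, rfl, rfl⟩
  have hgm : ∀ i y, y ∈ good i ↔ y ∈ L i ∧ ∀ i', i' ≠ i → y ∉ L i' ∧ mv i y ∉ R i' := by
    intro i y; simp [hgood]
  refine ⟨G, ?_, ?_, ?_, ?_⟩
  · intro y z h
    obtain ⟨i, hi, rfl⟩ := (hmem y z).1 h
    exact ⟨i, ((hgm _ _).1 hi).1, rfl⟩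
  · intro y z z' h h'
    obtain ⟨i, hi, rfl⟩ := (hmem _ _).1 h
    obtain ⟨i', hi', rfl⟩ := (hmem _ _).1 h'
    by_cases e : i' = i
    · rw [e]
    · exact absurd ((hgm _ _).1 hi').1 (((hgm _ _).1 hi).2 i' e).1
  · intro y y' z h h'
    obtain ⟨i, hi, rfl⟩ := (hmem _ _).1 h
    obtain ⟨i', hi', e1⟩ := (hmem _ _).1 h'
    by_cases e : i' = i
    · subst e; exact hinj _ e1
    · have := hmv i' y' ((hgm _ _).1 hi').1
      rw [← e1] at this
      exact absurd this (((hgm _ _).1 hi).2 i' e).2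
  · have hcard : G.card = ∑ i, (good i).card := by
      rw [hG, card_biUnion]
      · refine sum_congr rfl fun i _ => card_image_of_injective _ ?_
        intro y y' h
        exact (Prod.mk.inj h).1
      · intro i _ i' _ hne
        refine disjoint_left.2 ?_
        intro p hp hp'
        simp only [mem_image] at hp hp'
        obtain ⟨y, hy, rfl⟩ := hp
        obtain ⟨y', hy', h⟩ := hp'
        have h1 := (Prod.mk.inj h).1
        subst h1
        exact (((hgm _ _).1 hy).2 i' hne.symm).1 ((hgm _ _).1 hy').1
    have hgi : ∀ i, lo - 2 * Fintype.card ι * κ ≤ (good i).card := by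
      intro i
      have hsub : L i ⊆ good i ∪ ((univ.erase i).biUnion (fun i' => L i ∩ L i') ∪
          (univ.erase i).biUnion (fun i' => (R i ∩ R i').preimage (mv i) (hinj i).injOn)) := by
        intro y hy
        by_cases hyg : y ∈ good i
        · exact mem_union_left _ hyg
        · apply mem_union_right
          rw [hgm] at hyg
          push Not at hyg
          obtain ⟨i', hne, h⟩ := hyg hy
          by_cases h1 : y ∈ L i'
          · apply mem_union_left
            rw [mem_biUnion]
            exact ⟨i', mem_erase.2 ⟨hne, mem_univ _⟩, mem_inter.2 ⟨hy, h1⟩⟩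
          · apply mem_union_right
            rw [mem_biUnion]
            exact ⟨i', mem_erase.2 ⟨hne, mem_univ _⟩,
              mem_preimage.2 (mem_inter.2 ⟨hmv i y hy, h h1⟩)⟩
      have hc := (card_le_card hsub).trans ((card_union_le _ _).trans
        (Nat.add_le_add_left (card_union_le _ _) _))
      have hb1 : (((univ.erase i).biUnion (fun i' => L i ∩ L i')).card : ℝ) ≤ Fintype.card ι * κ := by
        calc _ ≤ ((∑ i' ∈ univ.erase i, (L i ∩ L i').card : ℕ) : ℝ) := by
              exact_mod_cast card_biUnion_le
          _ = ∑ i' ∈ univ.erase i, ((L i ∩ L i').card : ℝ) := by push_cast; rfl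
          _ ≤ ∑ i' ∈ univ.erase i, κ := sum_le_sum fun i' hi' => hL i i' (ne_of_mem_erase hi').symm
          _ ≤ ∑ i' : ι, κ := sum_le_sum_of_subset_of_nonneg (erase_subset _ _) (fun _ _ _ => hκ)
          _ = _ := by simp
      have hb2 : (((univ.erase i).biUnion
          (fun i' => (R i ∩ R i').preimage (mv i) (hinj i).injOn)).card : ℝ) ≤ Fintype.card ι * κ := by
        calc _ ≤ ((∑ i' ∈ univ.erase i, ((R i ∩ R i').preimage (mv i) (hinj i).injOn).card : ℕ) : ℝ) := by
              exact_mod_cast card_biUnion_le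
          _ = ∑ i' ∈ univ.erase i, (((R i ∩ R i').preimage (mv i) (hinj i).injOn).card : ℝ) := by
              push_cast; rfl
          _ ≤ ∑ i' ∈ univ.erase i, κ := sum_le_sum fun i' hi' => by
              refine le_trans ?_ (hR i i' (ne_of_mem_erase hi').symm)
              have : ((R i ∩ R i').preimage (mv i) (hinj i).injOn).card ≤ (R i ∩ R i').card := by
                rw [← card_image_of_injective _ (hinj i)]
                apply card_le_card
                intro z hz
                rw [mem_image] at hz
                obtain ⟨y, hy, rfl⟩ := hz
                exact mem_preimage.1 hy
              exact_mod_cast this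
          _ ≤ ∑ i' : ι, κ := sum_le_sum_of_subset_of_nonneg (erase_subset _ _) (fun _ _ _ => hκ)
          _ = _ := by simp
      have hc' : ((L i).card : ℝ) ≤ (good i).card +
          ((((univ.erase i).biUnion (fun i' => L i ∩ L i')).card : ℝ) + (((univ.erase i).biUnion
          (fun i' => (R i ∩ R i').preimage (mv i) (hinj i).injOn)).card : ℝ)) := by
        exact_mod_cast hc
      have := hlo i
      linarith
    rw [hcard]
    push_cast
    calc _ = ∑ _i : ι, (lo - 2 * Fintype.card ι * κ) := by
          rw [sum_const, card_univ, nsmul_eq_mul]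
      _ ≤ _ := sum_le_sum fun i _ => hgi i

/-- subsets of size `g` -/
abbrev SS (n g : ℕ) : Type := {S : Finset (Fin n) // S.card = g}

open Finset in
lemma card_SS_one (n g : ℕ) (a : Fin n) :
    n * (univ.filter (fun S : SS n g => a ∈ S.1)).card = g * n.choose g := by
  rcases g with _ | g
  · simp only [Nat.choose_zero_right, zero_mul, Nat.mul_eq_zero, card_eq_zero]
    right
    rw [filter_eq_empty_iff]
    rintro ⟨S, hS⟩ _
    rw [card_eq_zero] at hS
    simp [hS]
  have h : (univ.filter (fun S : SS n (g + 1) => a ∈ S.1)).card = (n - 1).choose g := by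
    have : (powersetCard g (univ.erase a)).card = (n - 1).choose g := by
      rw [card_powersetCard, card_erase_of_mem (mem_univ _), card_univ, Fintype.card_fin]
    rw [← this]
    refine card_bij (fun S _ => S.1.erase a) ?_ ?_ ?_
    · rintro ⟨S, hS⟩ h
      simp only [mem_filter, mem_univ, true_and] at h
      rw [mem_powersetCard]
      refine ⟨erase_subset_erase _ (subset_univ _), ?_⟩
      rw [card_erase_of_mem h, hS]; rfl
    · rintro ⟨S, hS⟩ h ⟨S', hS'⟩ h' e
      simp only [mem_filter, mem_univ, true_and] at h h' e
      apply Subtype.ext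
      simp only
      rw [← insert_erase h, ← insert_erase h', e]
    · intro A hA
      rw [mem_powersetCard] at hA
      have ha : a ∉ A := fun h => (mem_erase.1 (hA.1 h)).1 rfl
      refine ⟨⟨insert a A, by rw [card_insert_of_notMem ha, hA.2]⟩, by simp, by simp [ha]⟩
  rw [h]
  obtain ⟨n, rfl⟩ : ∃ n', n = n' + 1 := ⟨n - 1, by have := a.pos; omega⟩
  have := Nat.add_one_mul_choose_eq n g
  simp only [Nat.add_sub_cancel]
  rw [this]; ring

open Finset in
lemma card_SS_two (n g : ℕ) (a b : Fin n) (hab : a ≠ b) :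
    n * (n - 1) * (univ.filter (fun S : SS n g => a ∈ S.1 ∧ b ∈ S.1)).card
      = g * (g - 1) * n.choose g := by
  rcases g with _ | _ | g
  · simp only [Nat.choose_zero_right, zero_mul, Nat.mul_eq_zero, card_eq_zero]
    right
    rw [filter_eq_empty_iff]
    rintro ⟨S, hS⟩ _
    rw [card_eq_zero] at hS
    simp [hS]
  · simp only [zero_add, Nat.sub_self, mul_zero, zero_mul, Nat.mul_eq_zero, card_eq_zero]
    right
    rw [filter_eq_empty_iff]
    rintro ⟨S, hS⟩ _
    obtain ⟨x, rfl⟩ := card_eq_one.1 hS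
    simp only [mem_singleton]
    rintro ⟨rfl, rfl⟩
    exact hab rfl
  have hb : b ∈ univ.erase a := mem_erase.2 ⟨hab.symm, mem_univ _⟩
  have h : (univ.filter (fun S : SS n (g + 1 + 1) => a ∈ S.1 ∧ b ∈ S.1)).card = (n - 1 - 1).choose g := by
    have : (powersetCard g ((univ.erase a).erase b)).card = (n - 1 - 1).choose g := by
      rw [card_powersetCard, card_erase_of_mem hb, card_erase_of_mem (mem_univ _), card_univ,
        Fintype.card_fin]
    rw [← this]
    refine card_bij (fun S _ => (S.1.erase a).erase b) ?_ ?_ ?_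
    · rintro ⟨S, hS⟩ h
      simp only [mem_filter, mem_univ, true_and] at h
      rw [mem_powersetCard]
      refine ⟨erase_subset_erase _ (erase_subset_erase _ (subset_univ _)), ?_⟩
      rw [card_erase_of_mem (mem_erase.2 ⟨hab.symm, h.2⟩), card_erase_of_mem h.1, hS]; rfl
    · rintro ⟨S, hS⟩ h ⟨S', hS'⟩ h' e
      simp only [mem_filter, mem_univ, true_and] at h h' e
      apply Subtype.ext
      simp only
      rw [← insert_erase h.1, ← insert_erase h'.1,
        ← insert_erase (mem_erase.2 ⟨hab.symm, h.2⟩),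
        ← insert_erase (mem_erase.2 ⟨hab.symm, h'.2⟩), e]
    · intro A hA
      rw [mem_powersetCard] at hA
      have hb : b ∉ A := fun h => (mem_erase.1 (hA.1 h)).1 rfl
      have ha : a ∉ A := fun h => (mem_erase.1 (mem_erase.1 (hA.1 h)).2).1 rfl
      have ha' : a ∉ insert b A := by simp [hab, ha]
      refine ⟨⟨insert a (insert b A), by
        rw [card_insert_of_notMem ha', card_insert_of_notMem hb, hA.2]⟩, by simp, ?_⟩
      simp only
      rw [erase_insert ha', erase_insert hb]
  rw [h]
  obtain ⟨n, rfl⟩ : ∃ n', n = n' + 2 := ⟨n - 2, by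
    have h1 := a.2
    have h2 := b.2
    have h3 : a.1 ≠ b.1 := fun h => hab (Fin.ext h)
    omega⟩
  have e1 := Nat.add_one_mul_choose_eq n g
  have e2 := Nat.add_one_mul_choose_eq (n + 1) (g + 1)
  simp only [show n + 2 - 1 = n + 1 by omega, show n + 1 - 1 = n by omega,
    show g + 1 + 1 - 1 = g + 1 by omega]
  calc (n + 2) * (n + 1) * n.choose g = (n + 2) * ((n + 1) * n.choose g) := by ring
    _ = ((n + 1 + 1) * (n + 1).choose (g + 1)) * (g + 1) := by rw [e1]; ring
    _ = _ := by rw [e2]; ring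

open Finset in
lemma card_one_real (n g : ℕ) (a : Fin n) :
    ((univ.filter (fun S : SS n g => a ∈ S.1)).card : ℝ) = n.choose g * ((g : ℝ) / n) := by
  have h := card_SS_one n g a
  have hn : (0 : ℝ) < n := by exact_mod_cast a.pos
  have h' : (n : ℝ) * ((univ.filter (fun S : SS n g => a ∈ S.1)).card : ℝ) = g * n.choose g := by
    exact_mod_cast h
  field_simp
  linarith

open Finset in
lemma card_two_real (n g : ℕ) (hg : g ≤ n) (a b : Fin n) (hab : a ≠ b) :
    ((univ.filter (fun S : SS n g => a ∈ S.1 ∧ b ∈ S.1)).card : ℝ)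
      ≤ n.choose g * ((g : ℝ) / n) ^ 2 := by
  have h := card_SS_two n g a b hab
  have hn2 : 2 ≤ n := by
    have h1 := a.2
    have h2 := b.2
    have h3 : a.1 ≠ b.1 := fun h => hab (Fin.ext h)
    omega
  set c := (univ.filter (fun S : SS n g => a ∈ S.1 ∧ b ∈ S.1)).card with hc
  have hnpos : (0 : ℝ) < n := by positivity
  have hn1 : (0 : ℝ) < (n : ℝ) - 1 := by
    have : (2 : ℝ) ≤ n := by exact_mod_cast hn2
    linarith
  have hgn : (g : ℝ) ≤ n := by exact_mod_cast hg
  rcases Nat.eq_zero_or_pos g with h0 | h0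
  · subst h0
    have : c = 0 := by
      simp only [zero_mul, Nat.mul_eq_zero] at h
      omega
    rw [this, Nat.cast_zero]; positivity
  have h' : (n : ℝ) * ((n : ℝ) - 1) * (c : ℝ) = g * ((g : ℝ) - 1) * n.choose g := by
    have e1 : ((n - 1 : ℕ) : ℝ) = (n : ℝ) - 1 := by rw [Nat.cast_sub (by omega)]; simp
    have e2 : ((g - 1 : ℕ) : ℝ) = (g : ℝ) - 1 := by rw [Nat.cast_sub (by omega)]; simp
    rw [← e1, ← e2]
    exact_mod_cast h
  have hC : (0 : ℝ) ≤ n.choose g := by positivity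
  have hg0 : (0 : ℝ) ≤ g := by positivity
  rw [div_pow, mul_div_assoc', le_div_iff₀ (by positivity)]
  have key : ((n : ℝ) - 1) * ((c : ℝ) * n ^ 2) ≤ ((n : ℝ) - 1) * (n.choose g * g ^ 2) := by
    have : ((n : ℝ) - 1) * ((c : ℝ) * n ^ 2) = n * (g * ((g : ℝ) - 1) * n.choose g) := by
      rw [← h']; ring
    rw [this]
    have h3 : (n.choose g : ℝ) * g * (n * ((g : ℝ) - 1)) ≤ (n.choose g : ℝ) * g * (((n : ℝ) - 1) * g) := by
      apply mul_le_mul_of_nonneg_left _ (by positivity)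
      nlinarith
    nlinarith
  exact le_of_mul_le_mul_left key hn1

open Finset in
lemma card_sep_real (n g : ℕ) (hg : g ≤ n) (a b : Fin n) (hab : a ≠ b) :
    n.choose g * (((g : ℝ) / n) * (1 - (g : ℝ) / n)) ≤
    ((univ.filter (fun S : SS n g => a ∈ S.1 ∧ b ∉ S.1)).card : ℝ) := by
  have h1 := card_one_real n g a
  have h2 := card_two_real n g hg a b hab
  have h3 : (univ.filter (fun S : SS n g => a ∈ S.1 ∧ b ∈ S.1)).card +
      (univ.filter (fun S : SS n g => a ∈ S.1 ∧ b ∉ S.1)).card =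
      (univ.filter (fun S : SS n g => a ∈ S.1)).card := by
    rw [← filter_filter, ← filter_filter]
    exact card_filter_add_card_filter_not _
  have h3' : ((univ.filter (fun S : SS n g => a ∈ S.1 ∧ b ∈ S.1)).card : ℝ) +
      (univ.filter (fun S : SS n g => a ∈ S.1 ∧ b ∉ S.1)).card =
      (univ.filter (fun S : SS n g => a ∈ S.1)).card := by exact_mod_cast h3
  nlinarith

/-- swap two points in a set -/
def swapS {n g : ℕ} (a b : Fin n) (S : SS n g) : SS n g :=
  ⟨S.1.map (Equiv.swap a b).toEmbedding, by rw [Finset.card_map, S.2]⟩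

lemma swapS_inj {n g : ℕ} (a b : Fin n) : Function.Injective (swapS (g := g) a b) := by
  intro S S' h
  have := congrArg Subtype.val h
  exact Subtype.ext (Finset.map_injective _ this)

lemma mem_swapS {n g : ℕ} (a b : Fin n) (S : SS n g) (x : Fin n) :
    x ∈ (swapS a b S).1 ↔ Equiv.swap a b x ∈ S.1 := by
  simp only [swapS, Finset.mem_map, Equiv.coe_toEmbedding]
  constructor
  · rintro ⟨y, hy, rfl⟩; simpa using hy
  · intro h; exact ⟨_, h, by simp⟩

open Finset in
lemma swapS_sum {M : Type*} [AddCommGroup M] (h2 : ∀ x : M, x + x = 0) {n g : ℕ}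
    (v : Fin n → M) (a b : Fin n) (S : SS n g) (ha : a ∈ S.1) (hb : b ∉ S.1) :
    ∑ i ∈ S.1, v i + ∑ i ∈ (swapS a b S).1, v i = v a + v b := by
  simp only [swapS, sum_map, Equiv.coe_toEmbedding]
  rw [← add_sum_erase _ _ ha, ← add_sum_erase _ (fun i => v (Equiv.swap a b i)) ha]
  have : ∑ i ∈ S.1.erase a, v (Equiv.swap a b i) = ∑ i ∈ S.1.erase a, v i := by
    refine sum_congr rfl fun i hi => ?_
    rw [Equiv.swap_apply_of_ne_of_ne (ne_of_mem_erase hi)]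
    rintro rfl
    exact hb (mem_of_mem_erase hi)
  rw [this, Equiv.swap_apply_left]
  have := h2 (∑ i ∈ S.1.erase a, v i)
  calc _ = v a + v b + (∑ i ∈ S.1.erase a, v i + ∑ i ∈ S.1.erase a, v i) := by abel
    _ = _ := by rw [this, add_zero]

open Finset in
lemma kik_color (n g q m : ℕ) (a b : Fin m → Fin q → Fin n) (hab : ∀ i j, a i j ≠ b i j)
    (ha : ∀ i i' j, i ≠ i' → a i j ≠ a i' j) (hb : ∀ i i' j, i ≠ i' → b i j ≠ b i' j)
    (hn : 0 < n) (hq : 1 ≤ q) (hg : 2 * (q * g) ≤ n) (hm : (m : ℝ) * ((g : ℝ) / n) ^ q ≤ 1 / 8) :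
    ∃ G : Finset ((Fin q → SS n g) × (Fin q → SS n g)),
      (∀ y z, (y, z) ∈ G → ∃ i, (∀ j, a i j ∈ (y j).1 ∧ b i j ∉ (y j).1) ∧
        z = fun j => swapS (a i j) (b i j) (y j)) ∧
      (∀ y z z', (y, z) ∈ G → (y, z') ∈ G → z = z') ∧
      (∀ y y' z, (y, z) ∈ G → (y', z) ∈ G → y = y') ∧
      (n.choose g : ℝ) ^ q * (m * ((g : ℝ) / n) ^ q) / 4 ≤ G.card := by
  have hgn : g ≤ n := by nlinarith
  set L : Fin m → Finset (Fin q → SS n g) := fun i => Fintype.piFinset fun j =>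
    univ.filter (fun S : SS n g => a i j ∈ S.1 ∧ b i j ∉ S.1) with hL
  set R : Fin m → Finset (Fin q → SS n g) := fun i => Fintype.piFinset fun j =>
    univ.filter (fun S : SS n g => b i j ∈ S.1 ∧ a i j ∉ S.1) with hR
  have mL : ∀ i y, y ∈ L i ↔ ∀ j, a i j ∈ (y j).1 ∧ b i j ∉ (y j).1 := by
    intro i y; simp [hL, Fintype.mem_piFinset]
  have mR : ∀ i y, y ∈ R i ↔ ∀ j, b i j ∈ (y j).1 ∧ a i j ∉ (y j).1 := by
    intro i y; simp [hR, Fintype.mem_piFinset]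
  set x : ℝ := (g : ℝ) / n with hx
  set C : ℝ := (n.choose g : ℝ) with hC
  have hC0 : 0 ≤ C := by positivity
  have hx0 : 0 ≤ x := by positivity
  have hnR : (0 : ℝ) < n := by exact_mod_cast hn
  have hqx : (q : ℝ) * x ≤ 1 / 2 := by
    rw [hx, mul_div_assoc', div_le_iff₀ hnR]
    have : (2 * (q * g) : ℝ) ≤ n := by exact_mod_cast hg
    linarith
  have hq1 : (1 : ℝ) ≤ q := by exact_mod_cast hq
  have hx1 : x ≤ 1 / 2 := by nlinarith
  have two : ∀ c d : Fin q → Fin n, (∀ j, c j ≠ d j) →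
      ((Fintype.piFinset fun j => univ.filter (fun S : SS n g => c j ∈ S.1 ∧ d j ∈ S.1)).card : ℝ)
        ≤ C ^ q * (x ^ q) ^ 2 := by
    intro c d hcd
    rw [Fintype.card_piFinset]
    push_cast
    calc _ ≤ ∏ j : Fin q, (C * x ^ 2) := prod_le_prod (fun _ _ => by positivity)
            (fun j _ => card_two_real n g hgn _ _ (hcd j))
      _ = _ := by rw [prod_const, card_univ, Fintype.card_fin, mul_pow, ← pow_mul, ← pow_mul,
                    mul_comm 2 q]
  obtain ⟨G, h1, h2, h3, h4⟩ := extract_matching L R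
    (fun i y => fun j => swapS (a i j) (b i j) (y j))
    (by
      intro i y y' h
      funext j
      exact swapS_inj _ _ (congrFun h j))
    (by
      intro i y hy
      rw [mL] at hy
      rw [mR]
      intro j
      rw [mem_swapS, mem_swapS, Equiv.swap_apply_left, Equiv.swap_apply_right]
      exact hy j)
    (C ^ q * x ^ q / 2) (C ^ q * (x ^ q) ^ 2)
    (by
      intro i
      rw [hL]
      simp only
      rw [Fintype.card_piFinset]
      push_cast
      calc C ^ q * x ^ q / 2 ≤ C ^ q * x ^ q * (1 + (q : ℝ) * (-x)) := by
            rw [div_eq_mul_inv]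
            apply mul_le_mul_of_nonneg_left _ (by positivity)
            linarith
        _ ≤ C ^ q * x ^ q * (1 + (-x)) ^ q := by
            apply mul_le_mul_of_nonneg_left _ (by positivity)
            exact one_add_mul_le_pow (by linarith) q
        _ = ∏ j : Fin q, (C * (x * (1 - x))) := by
            rw [prod_const, card_univ, Fintype.card_fin, mul_pow, mul_pow, ← sub_eq_add_neg]; ring
        _ ≤ _ := prod_le_prod (fun _ _ => by
            have : 0 ≤ 1 - x := by linarith
            positivity)
            (fun j _ => card_sep_real n g hgn _ _ (hab i j)))
    (by positivity)
    (by
      intro i i' hne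
      refine le_trans ?_ (two (a i) (a i') (fun j => ha i i' j hne))
      have : L i ∩ L i' ⊆ _ := fun y hy => by
        rw [mem_inter, mL, mL] at hy
        exact (Fintype.mem_piFinset (t := fun j => univ.filter
          (fun S : SS n g => a i j ∈ S.1 ∧ a i' j ∈ S.1))).2
          fun j => by simpa using ⟨(hy.1 j).1, (hy.2 j).1⟩
      exact_mod_cast card_le_card this)
    (by
      intro i i' hne
      refine le_trans ?_ (two (b i) (b i') (fun j => hb i i' j hne))
      have : R i ∩ R i' ⊆ _ := fun y hy => by
        rw [mem_inter, mR, mR] at hy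
        exact (Fintype.mem_piFinset (t := fun j => univ.filter
          (fun S : SS n g => b i j ∈ S.1 ∧ b i' j ∈ S.1))).2
          fun j => by simpa using ⟨(hy.1 j).1, (hy.2 j).1⟩
      exact_mod_cast card_le_card this)
  refine ⟨G, fun y z h => ?_, h2, h3, ?_⟩
  · obtain ⟨i, hi, e⟩ := h1 y z h
    exact ⟨i, (mL _ _).1 hi, e⟩
  · refine le_trans ?_ h4
    rw [Fintype.card_fin]
    have : 0 ≤ C ^ q * (m * x ^ q) * (1 / 8 - m * x ^ q) :=
      mul_nonneg (by positivity) (by linarith)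
    nlinarith

open Finset in
lemma split_edge {n q : ℕ} (e : Finset (Fin n)) (he : e.card = q + q + 1) :
    ∃ (a b : Fin q → Fin n) (c : Fin n), (∀ j, a j ∈ e) ∧ (∀ j, b j ∈ e) ∧ c ∈ e ∧
      (∀ j, a j ≠ b j) ∧ ∀ {M : Type} [AddCommGroup M] (v : Fin n → M),
        ∑ x ∈ e, v x = ∑ j, (v (a j) + v (b j)) + v c := by
  set f := e.orderEmbOfFin he with hf
  refine ⟨fun j => f (Fin.castSucc (Fin.castAdd q j)), fun j => f (Fin.castSucc (Fin.natAdd q j)),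
    f (Fin.last _), fun j => orderEmbOfFin_mem _ _ _, fun j => orderEmbOfFin_mem _ _ _,
    orderEmbOfFin_mem _ _ _, ?_, ?_⟩
  · intro j h
    have h1 := f.injective h
    have h2 := congrArg Fin.val h1
    simp at h2
    have := j.2
    omega
  · intro M _ v
    have : ∑ x ∈ e, v x = ∑ i, v (f i) := by
      conv_lhs => rw [← image_orderEmbOfFin_univ e he]
      rw [sum_image]
      intro i _ i' _ h
      exact f.injective h
    rw [this, Fin.sum_univ_castSucc, Fin.sum_univ_add, sum_add_distrib]

open Finset in
lemma color_data {M : Type} [AddCommGroup M] (h2 : ∀ x : M, x + x = 0) {n q m : ℕ}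
    (v : Fin n → M) (w : M) (H : Finset (Finset (Fin n)))
    (hc : ∀ e ∈ H, e.card = q + q + 1)
    (hd : ∀ e ∈ H, ∀ e' ∈ H, e ≠ e' → Disjoint e e')
    (hs : ∀ e ∈ H, w = ∑ x ∈ e, v x) (Bad : Finset (Fin n)) (hm : m + Bad.card ≤ H.card) :
    ∃ (a b : Fin m → Fin q → Fin n) (c : Fin m → Fin n), (∀ i j, a i j ≠ b i j) ∧
      (∀ i i' j, i ≠ i' → a i j ≠ a i' j) ∧ (∀ i i' j, i ≠ i' → b i j ≠ b i' j) ∧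
      (∀ i, c i ∉ Bad) ∧ ∀ i, ∑ j, (v (a i j) + v (b i j)) = w + v (c i) := by
  have hcard : m ≤ (H.filter (fun e => Disjoint e Bad)).card := by
    have h1 : (H.filter (fun e => ¬ Disjoint e Bad)).card ≤ Bad.card := by
      have hx : ∀ e ∈ H.filter (fun e => ¬ Disjoint e Bad), ∃ x, x ∈ e ∧ x ∈ Bad := by
        intro e he
        exact not_disjoint_iff.1 (mem_filter.1 he).2
      rcases isEmpty_or_nonempty (Fin n) with hemp | hemp
      · have : H.filter (fun e => ¬ Disjoint e Bad) = ∅ := by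
          rw [eq_empty_iff_forall_notMem]
          intro e he
          obtain ⟨x, _⟩ := hx e he
          exact hemp.elim x
        rw [this]; simp
      choose! p hp using hx
      refine card_le_card_of_injOn p (fun e he => (hp e he).2) ?_
      intro e he e' he' h
      by_contra hne
      have hd' := hd e (mem_filter.1 he).1 e' (mem_filter.1 he').1 hne
      have h3 := (hp e' he').1
      rw [← h] at h3
      exact disjoint_left.1 hd' (hp e he).1 h3
    have h2 := card_filter_add_card_filter_not (s := H) (fun e => Disjoint e Bad)
    omega
  set H' := H.filter (fun e => Disjoint e Bad) with hH'
  set f : Fin m → Finset (Fin n) := fun i => (H'.equivFin.symm (Fin.castLE hcard i)).1 with hf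
  have hfm : ∀ i, f i ∈ H' := fun i => (H'.equivFin.symm (Fin.castLE hcard i)).2
  have hfi : Function.Injective f := by
    intro i i' h
    have := H'.equivFin.symm.injective (Subtype.ext h)
    exact Fin.castLE_injective hcard this
  have hfH : ∀ i, f i ∈ H := fun i => (mem_filter.1 (hfm i)).1
  choose a b c h1 h2' h3 h4 h5 using fun i => split_edge (f i) (hc _ (hfH i))
  refine ⟨a, b, c, h4, ?_, ?_, ?_, ?_⟩
  · intro i i' j hne h
    have := h1 i' j
    rw [← h] at this
    exact disjoint_left.1 (hd _ (hfH i) _ (hfH i') (fun h => hne (hfi h))) (h1 i j) this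
  · intro i i' j hne h
    have := h2' i' j
    rw [← h] at this
    exact disjoint_left.1 (hd _ (hfH i) _ (hfH i') (fun h => hne (hfi h))) (h2' i j) this
  · intro i h
    exact disjoint_left.1 (mem_filter.1 (hfm i)).2 (h3 i) h
  · intro i
    rw [hs _ (hfH i), h5 i v, add_assoc, h2, add_zero]

open Finset in
lemma block {M : Type} [AddCommGroup M] (h2 : ∀ x : M, x + x = 0) {n q g m j : ℕ}
    (v : Fin n → M) (H : Fin n → Finset (Finset (Fin n)))
    (hc : ∀ s, ∀ e ∈ H s, e.card = q + q + 1)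
    (hd : ∀ s, ∀ e ∈ H s, ∀ e' ∈ H s, e ≠ e' → Disjoint e e')
    (hs : ∀ s, ∀ e ∈ H s, v s = ∑ x ∈ e, v x) (Bad T : Finset (Fin n))
    (hT : T.card = 4 * j) (hj : 1 ≤ j)
    (hm : ∀ s, m + Bad.card ≤ (H s).card)
    (hn : 0 < n) (hq : 1 ≤ q) (hg : 2 * (q * g) ≤ n)
    (hm1 : 1 / 16 ≤ (m : ℝ) * ((g : ℝ) / n) ^ q) (hm2 : (m : ℝ) * ((g : ℝ) / n) ^ q ≤ 1 / 8)
    (φ : ℝ) (hφ : 0 ≤ φ)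
    (hdense : 2 * φ * (2 * (n.choose g : ℝ) ^ q) * Real.log (2 * (n.choose g : ℝ) ^ q)
      < 4 * j * ((n.choose g : ℝ) ^ q / 32))
    (hbig : 8 * Real.log (2 * (n.choose g : ℝ) ^ q) < (1 + φ / (8 * j)) ^ j) :
    ∃ W, W ⊆ T ∧ W.Nonempty ∧ ∃ gb : Fin n → Fin n, (∀ s ∈ W, gb s ∉ Bad) ∧
      ∑ s ∈ W, v s = ∑ s ∈ W, v (gb s) := by
  have hcol : ∀ s : Fin n, ∃ G : Finset ((Fin q → SS n g) × (Fin q → SS n g)),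
      (∀ y z, (y, z) ∈ G → ∃ c, c ∉ Bad ∧
        ∑ l, ∑ i ∈ (y l).1, v i + ∑ l, ∑ i ∈ (z l).1, v i = v s + v c) ∧
      (∀ y z z', (y, z) ∈ G → (y, z') ∈ G → z = z') ∧
      (∀ y y' z, (y, z) ∈ G → (y', z) ∈ G → y = y') ∧
      (n.choose g : ℝ) ^ q / 64 ≤ G.card := by
    intro s
    obtain ⟨a, b, c, d1, d2, d3, d4, d5⟩ := color_data h2 v (v s) (H s) (hc s) (hd s) (hs s) Bad (hm s)
    obtain ⟨G, g1, g2, g3, g4⟩ := kik_color n g q m a b d1 d2 d3 hn hq hg hm2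
    refine ⟨G, ?_, g2, g3, ?_⟩
    · intro y z h
      obtain ⟨i, hi, rfl⟩ := g1 y z h
      refine ⟨c i, d4 i, ?_⟩
      rw [← sum_add_distrib, ← d5 i]
      exact sum_congr rfl fun l _ => swapS_sum h2 v _ _ _ (hi l).1 (hi l).2
    · refine le_trans ?_ g4
      have : 0 ≤ (n.choose g : ℝ) ^ q := by positivity
      nlinarith
  choose G g1 g2 g3 g4 using hcol
  set E : T → Finset (((Fin q → SS n g) × Bool) × ((Fin q → SS n g) × Bool)) := fun s =>
    (G s).image (fun p => ((p.1, false), (p.2, true))) ∪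
    (G s).image (fun p => ((p.2, true), (p.1, false))) with hE
  have mE : ∀ (s : T) (y z : (Fin q → SS n g) × Bool), (y, z) ∈ E s ↔
      (y.2 = false ∧ z.2 = true ∧ (y.1, z.1) ∈ G s) ∨
      (y.2 = true ∧ z.2 = false ∧ (z.1, y.1) ∈ G s) := by
    rintro s ⟨y, yb⟩ ⟨z, bz⟩
    simp only [hE, mem_union, mem_image, Prod.mk.injEq, Prod.exists]
    constructor
    · rintro (⟨p, p', h, ⟨rfl, rfl⟩, rfl, rfl⟩ | ⟨p, p', h, ⟨rfl, rfl⟩, rfl, rfl⟩)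
      · exact Or.inl ⟨rfl, rfl, h⟩
      · exact Or.inr ⟨rfl, rfl, h⟩
    · rintro (⟨rfl, rfl, h⟩ | ⟨rfl, rfl, h⟩)
      · exact Or.inl ⟨y, z, h, ⟨rfl, rfl⟩, rfl, rfl⟩
      · exact Or.inr ⟨z, y, h, ⟨rfl, rfl⟩, rfl, rfl⟩
  have cE : ∀ s : T, (n.choose g : ℝ) ^ q / 32 ≤ (E s).card := by
    intro s
    have : (E s).card = (G s).card + (G s).card := by
      rw [hE]
      simp only
      rw [card_union_of_disjoint, card_image_of_injective, card_image_of_injective]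
      · rintro ⟨p, p'⟩ ⟨r, r'⟩ h
        simp only [Prod.mk.injEq, and_true] at h
        simp [h.1, h.2]
      · rintro ⟨p, p'⟩ ⟨r, r'⟩ h
        simp only [Prod.mk.injEq, and_true] at h
        simp [h.1, h.2]
      · rw [disjoint_left]
        rintro ⟨y, z⟩ h h'
        simp only [mem_image, Prod.mk.injEq] at h h'
        obtain ⟨p, _, h1, _⟩ := h
        obtain ⟨p', _, h1', _⟩ := h'
        rw [← h1'] at h1
        simp at h1
    rw [this]
    push_cast
    have := g4 s
    linarith
  set x : (Fin q → SS n g) × Bool → M := fun f => ∑ l, ∑ i ∈ (f.1 l).1, v i with hx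
  have hEx : ∀ (s : T) y z, (y, z) ∈ E s → ∃ c, c ∉ Bad ∧ x y + x z = v s + v c := by
    intro s y z h
    rcases (mE s y z).1 h with ⟨_, _, h⟩ | ⟨_, _, h⟩
    · exact g1 s _ _ h
    · obtain ⟨c, hc, e⟩ := g1 s _ _ h
      exact ⟨c, hc, by rw [add_comm]; exact e⟩
  have cF : (Fintype.card ((Fin q → SS n g) × Bool) : ℝ) = 2 * (n.choose g : ℝ) ^ q := by
    rw [Fintype.card_prod, Fintype.card_fun, Fintype.card_finset_len]
    simp [mul_comm]
  obtain ⟨u, w, W, hne, ⟨W0, hW0, gb0, p1, p2, p3⟩, ⟨W1, hW1, gb1, r1, r2, r3⟩⟩ :=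
    rainbow (T := T) (V := (Fin q → SS n g) × Bool) E
    (by
      intro s y z h
      rw [mE] at h ⊢
      tauto)
    (by
      rintro s ⟨y, y'⟩ ⟨z, z'⟩ ⟨r, r'⟩ h h'
      rw [mE] at h h'
      simp only at h h'
      rcases h with ⟨e1, e2, h⟩ | ⟨e1, e2, h⟩ <;> rcases h' with ⟨e1', e2', h'⟩ | ⟨e1', e2', h'⟩
      · rw [e2, e2', g2 s _ _ _ h h']
      · rw [e1] at e1'; simp at e1'
      · rw [e1] at e1'; simp at e1'
      · rw [e2, e2', g3 s _ _ _ h h'])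
    (by
      intro s y h
      rw [mE] at h
      rcases h with ⟨e1, e2, h⟩ | ⟨e1, e2, h⟩ <;> rw [e1] at e2 <;> simp at e2)
    j hj (by rw [Fintype.card_coe, hT]) φ hφ
    (by
      rw [cF]
      refine lt_of_lt_of_le hdense ?_
      calc _ = ∑ _c : T, (n.choose g : ℝ) ^ q / 32 := by
            rw [sum_const, card_univ, Fintype.card_coe, hT, nsmul_eq_mul]; push_cast; ring
        _ ≤ _ := sum_le_sum fun c _ => cE c)
    (by rw [cF]; exact hbig)
    (fun u W y => ∃ W0, W0 ⊆ W ∧ ∃ gb : T → Fin n, (∀ s ∈ W0, gb s ∉ Bad) ∧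
      x u + x y = ∑ s ∈ W0, (v s + v (gb s)) ∧ (W0 = ∅ → y = u))
    (by
      intro u
      exact ⟨∅, subset_rfl, fun s => s.1, by simp, by simp [h2], fun _ => rfl⟩)
    (by
      rintro u W W' y h ⟨W0, h1, h3⟩
      exact ⟨W0, h1.trans h, h3⟩)
    (by
      rintro u W c y z ⟨W0, hW0, gb, q1, q2, q3⟩ hcW hE
      obtain ⟨d, hd, e⟩ := hEx c y z hE
      have hcW0 : c ∉ W0 := fun h => hcW (hW0 h)
      refine ⟨insert c W0, insert_subset_insert _ hW0, Function.update gb c d, ?_, ?_, ?_⟩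
      · intro s hs
        by_cases h : s = c
        · subst h; simpa using hd
        · rw [Function.update_of_ne h]
          exact q1 s (by simpa [h] using hs)
      · rw [sum_insert hcW0, Function.update_self, ← e]
        have : ∑ s ∈ W0, (v s + v (Function.update gb c d s)) = ∑ s ∈ W0, (v s + v (gb s)) := by
          refine sum_congr rfl fun s hs => ?_
          rw [Function.update_of_ne (fun h : s = c => hcW0 (h ▸ hs))]
        rw [this, ← q2]
        have h3 := h2 (x y)
        calc x u + x z = x u + x z + (x y + x y) := by rw [h3, add_zero]
          _ = _ := by abel
      · intro h
        exact absurd h (insert_ne_empty _ _))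
  have hdis : Disjoint W0 W1 := by
    rw [disjoint_left]
    intro s h h'
    exact (mem_compl.1 (hW1 h')) (hW0 h)
  set gb : T → Fin n := fun s => if s ∈ W0 then gb0 s else gb1 s with hgb
  have e0 : ∑ s ∈ W0, (v s + v (gb0 s)) = ∑ s ∈ W0, (v s + v (gb s)) := by
    refine sum_congr rfl fun s hs => ?_
    simp [hgb, hs]
  have e1 : ∑ s ∈ W1, (v s + v (gb1 s)) = ∑ s ∈ W1, (v s + v (gb s)) := by
    refine sum_congr rfl fun s hs => ?_
    have : s ∉ W0 := fun h => disjoint_left.1 hdis h hs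
    simp [hgb, this]
  have e2 : ∑ s ∈ W0 ∪ W1, (v s + v (gb s)) = 0 := by
    rw [sum_union hdis, ← e0, ← e1, ← p2, ← r2, h2]
  rw [sum_add_distrib] at e2
  have e3 : ∑ s ∈ W0 ∪ W1, v s = ∑ s ∈ W0 ∪ W1, v (gb s) := by
    have h3 := h2 (∑ s ∈ W0 ∪ W1, v (gb s))
    exact add_right_cancel (e2.trans h3.symm)
  have hnon : W0.Nonempty := by
    rw [nonempty_iff_ne_empty]
    exact fun h => hne (p3 h)
  refine ⟨(W0 ∪ W1).map (Function.Embedding.subtype _), ?_, ?_, fun s => if h : s ∈ T then gb ⟨s, h⟩ else s,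
    ?_, ?_⟩
  · intro s hs
    rw [mem_map] at hs
    obtain ⟨t, _, rfl⟩ := hs
    exact t.2
  · exact (hnon.mono subset_union_left).map
  · intro s hs
    rw [mem_map] at hs
    obtain ⟨t, ht, rfl⟩ := hs
    have : (Function.Embedding.subtype (· ∈ T)) t ∈ T := t.2
    simp only [dif_pos this]
    change gb t ∉ Bad
    by_cases h : t ∈ W0
    · simp only [hgb, h, if_true]; exact p1 t h
    · simp only [hgb, h, if_false]
      exact r1 t ((mem_union.1 ht).resolve_left h)
  · rw [sum_map, sum_map]
    simp only [Function.Embedding.subtype_apply, Subtype.coe_eta, coe_mem, dite_true]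
    exact e3

open Finset in
lemma multiset_to_finset {M α : Type*} [AddCommGroup M] [DecidableEq α] (h2 : ∀ x : M, x + x = 0)
    (v : α → M) (s : Multiset α) :
    ∃ T : Finset α, T.card ≤ s.card ∧ ∑ x ∈ T, v x = (s.map v).sum := by
  induction s using Multiset.induction with
  | empty => exact ⟨∅, by simp, by simp⟩
  | cons a s ih =>
    obtain ⟨T, h1, h3⟩ := ih
    by_cases ha : a ∈ T
    · refine ⟨T.erase a, ?_, ?_⟩
      · rw [card_erase_of_mem ha, Multiset.card_cons]; omega
      · rw [Multiset.map_cons, Multiset.sum_cons, ← h3, ← add_sum_erase _ _ ha, ← add_assoc, h2,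
          zero_add]
    · refine ⟨insert a T, ?_, ?_⟩
      · rw [card_insert_of_notMem ha, Multiset.card_cons]; omega
      · rw [Multiset.map_cons, Multiset.sum_cons, ← h3, sum_insert ha]

open Finset in
lemma reduce_rep {M : Type} [AddCommGroup M] (h2 : ∀ x : M, x + x = 0) {n j D Mb : ℕ}
    (v : Fin n → M)
    (hblock : ∀ T Bad : Finset (Fin n), T.card = 4 * j → Bad.card ≤ D →
      ∃ W, W ⊆ T ∧ W.Nonempty ∧ ∃ gb : Fin n → Fin n, (∀ s ∈ W, gb s ∉ Bad) ∧
        ∑ s ∈ W, v s = ∑ s ∈ W, v (gb s))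
    (hD : n < Mb * (D + 1)) (T : Finset (Fin n)) (hT : Mb * (4 * j) ≤ T.card) :
    ∃ T' : Finset (Fin n), T'.card < T.card ∧ ∑ x ∈ T', v x = ∑ x ∈ T, v x := by
  classical
  set em : Fin Mb × Fin (4 * j) → Fin n := fun p =>
    (T.equivFin.symm (Fin.castLE hT (finProdFinEquiv p))).1 with hem
  have hemi : Function.Injective em := by
    intro p p' h
    have := T.equivFin.symm.injective (Subtype.ext h)
    exact finProdFinEquiv.injective (Fin.castLE_injective hT this)
  have hemT : ∀ p, em p ∈ T := fun p => (T.equivFin.symm (Fin.castLE hT (finProdFinEquiv p))).2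
  set Ti : Fin Mb → Finset (Fin n) := fun i => univ.image (fun l => em (i, l)) with hTi
  have cTi : ∀ i, (Ti i).card = 4 * j := by
    intro i
    rw [hTi]
    simp only
    rw [card_image_of_injective, card_univ, Fintype.card_fin]
    intro l l' h
    exact (Prod.mk.inj (hemi h)).2
  have dTi : ∀ i i', i ≠ i' → Disjoint (Ti i) (Ti i') := by
    intro i i' hne
    rw [disjoint_left]
    intro x hx hx'
    simp only [hTi, mem_image, mem_univ, true_and] at hx hx'
    obtain ⟨l, rfl⟩ := hx
    obtain ⟨l', h⟩ := hx'
    exact hne (Prod.mk.inj (hemi h)).1.symm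
  have sTi : ∀ i, Ti i ⊆ T := by
    intro i x hx
    simp only [hTi, mem_image, mem_univ, true_and] at hx
    obtain ⟨l, rfl⟩ := hx
    exact hemT _
  set B : Fin Mb → Finset (Fin n) := fun i => univ.filter (fun c => ∃ W, W ⊆ Ti i ∧
    ∃ gb : Fin n → Fin n, (∃ s ∈ W, gb s = c) ∧ ∑ s ∈ W, v s = ∑ s ∈ W, v (gb s)) with hB
  have cB : ∀ i, D + 1 ≤ (B i).card := by
    intro i
    by_contra hlt
    obtain ⟨W, w1, ⟨s, hs⟩, gb, w2, w3⟩ := hblock (Ti i) (B i) (cTi i) (by omega)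
    apply w2 s hs
    simp only [hB, mem_filter, mem_univ, true_and]
    exact ⟨W, w1, gb, ⟨s, hs, rfl⟩, w3⟩
  have hex : ∃ i i', i ≠ i' ∧ ¬ Disjoint (B i) (B i') := by
    by_contra hcon
    push Not at hcon
    have h1 : (univ.biUnion B).card = ∑ i, (B i).card :=
      card_biUnion (fun i _ i' _ hne => hcon i i' hne)
    have h3 : (univ.biUnion B).card ≤ n := by
      simpa using card_le_univ (univ.biUnion B)
    have h4 : ∑ _i : Fin Mb, (D + 1) ≤ ∑ i, (B i).card := sum_le_sum fun i _ => cB i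
    rw [sum_const, card_univ, Fintype.card_fin, smul_eq_mul] at h4
    omega
  obtain ⟨i, i', hne, hnd⟩ := hex
  obtain ⟨c, hc, hc'⟩ := not_disjoint_iff.1 hnd
  simp only [hB, mem_filter, mem_univ, true_and] at hc hc'
  obtain ⟨W, hW, gb, ⟨s, hs, hsc⟩, e⟩ := hc
  obtain ⟨W', hW', gb', ⟨s', hs', hsc'⟩, e'⟩ := hc'
  have hdis : Disjoint W W' := disjoint_of_subset_left hW (disjoint_of_subset_right hW' (dTi i i' hne))
  have hsub : W ∪ W' ⊆ T := union_subset (hW.trans (sTi i)) (hW'.trans (sTi i'))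
  obtain ⟨T', t1, t2⟩ := multiset_to_finset h2 v
    ((T \ (W ∪ W')).val + (W.erase s).val.map gb + (W'.erase s').val.map gb')
  refine ⟨T', lt_of_le_of_lt t1 ?_, ?_⟩
  · simp only [Multiset.card_add, Multiset.card_map, card_val]
    have h3 := card_sdiff_add_card_eq_card hsub
    rw [card_union_of_disjoint hdis] at h3
    rw [card_erase_of_mem hs, card_erase_of_mem hs']
    have := card_pos.2 ⟨s, hs⟩
    omega
  · rw [t2, Multiset.map_add, Multiset.map_add, Multiset.sum_add, Multiset.sum_add,
      Multiset.map_map, Multiset.map_map]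
    change ∑ x ∈ T \ (W ∪ W'), v x + ∑ x ∈ W.erase s, v (gb x) + ∑ x ∈ W'.erase s', v (gb' x) = _
    rw [← sum_sdiff hsub, sum_union hdis, e, e', ← add_sum_erase _ _ hs, ← add_sum_erase W' _ hs',
      hsc, hsc']
    have h3 := h2 (v c)
    generalize ∑ x ∈ T \ (W ∪ W'), v x = X
    generalize ∑ x ∈ W.erase s, v (gb x) = Y
    generalize ∑ x ∈ W'.erase s', v (gb' x) = Z
    calc X + Y + Z = X + Y + Z + (v c + v c) := by rw [h3, add_zero]
      _ = _ := by abel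

open Finset in
lemma count_rep {M : Type} [AddCommGroup M] {n : ℕ} (v : Fin n → M) (R : ℕ) :
    ∀ T : Finset (Fin n), T.card ≤ R →
      ∃ f : Fin R → Option (Fin n), ∑ l, (f l).elim 0 v = ∑ x ∈ T, v x := by
  induction R with
  | zero =>
    intro T hT
    have : T = ∅ := card_eq_zero.1 (by omega)
    exact ⟨fun _ => none, by simp [this]⟩
  | succ R ih =>
    intro T hT
    rcases T.eq_empty_or_nonempty with h | ⟨a, ha⟩
    · exact ⟨fun _ => none, by simp [h]⟩
    · obtain ⟨f, hf⟩ := ih (T.erase a) (by rw [card_erase_of_mem ha]; omega)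
      refine ⟨Fin.cons (some a) f, ?_⟩
      rw [Fin.sum_univ_succ]
      simp only [Fin.cons_zero, Fin.cons_succ, Option.elim_some]
      rw [hf, add_sum_erase _ _ ha]

open Finset in
lemma dim_bound {n k j D Mb : ℕ} (v : Fin n → Fin k → ZMod 2)
    (hspan : Submodule.span (ZMod 2) (Set.range v) = ⊤)
    (hblock : ∀ T Bad : Finset (Fin n), T.card = 4 * j → Bad.card ≤ D →
      ∃ W, W ⊆ T ∧ W.Nonempty ∧ ∃ gb : Fin n → Fin n, (∀ s ∈ W, gb s ∉ Bad) ∧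
        ∑ s ∈ W, v s = ∑ s ∈ W, v (gb s))
    (hD : n < Mb * (D + 1)) : 2 ^ k ≤ (n + 1) ^ (Mb * (4 * j)) := by
  have h2 : ∀ x : Fin k → ZMod 2, x + x = 0 := by
    intro x; funext i
    exact CharTwo.add_self_eq_zero (x i)
  have hall : ∀ x : Fin k → ZMod 2, ∃ s : Multiset (Fin n), (s.map v).sum = x := by
    intro x
    have hx : x ∈ Submodule.span (ZMod 2) (Set.range v) := by rw [hspan]; trivial
    induction hx using Submodule.span_induction with
    | mem x h =>
      obtain ⟨i, rfl⟩ := h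
      exact ⟨{i}, by simp⟩
    | zero => exact ⟨0, by simp⟩
    | add x y _ _ hx hy =>
      obtain ⟨s, rfl⟩ := hx
      obtain ⟨t, rfl⟩ := hy
      exact ⟨s + t, by simp⟩
    | smul a x _ hx =>
      obtain ⟨s, rfl⟩ := hx
      have : a = 0 ∨ a = 1 := by revert a; decide
      rcases this with rfl | rfl
      · exact ⟨0, by simp⟩
      · exact ⟨s, by simp⟩
  have hred : ∀ N : ℕ, ∀ T : Finset (Fin n), T.card = N →
      ∃ T' : Finset (Fin n), T'.card ≤ Mb * (4 * j) ∧ ∑ x ∈ T', v x = ∑ x ∈ T, v x := by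
    intro N
    induction N using Nat.strong_induction_on with
    | _ N ih =>
      intro T hT
      by_cases h : Mb * (4 * j) ≤ T.card
      · obtain ⟨T1, h1, h3⟩ := reduce_rep h2 v hblock hD T h
        obtain ⟨T2, h4, h5⟩ := ih T1.card (by omega) T1 rfl
        exact ⟨T2, h4, h5.trans h3⟩
      · exact ⟨T, by omega, rfl⟩
  have hsurj : Function.Surjective (fun f : Fin (Mb * (4 * j)) → Option (Fin n) =>
      ∑ l, (f l).elim 0 v) := by
    intro x
    obtain ⟨s, hs⟩ := hall x
    obtain ⟨T, _, h3⟩ := multiset_to_finset h2 v s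
    obtain ⟨T', h4, h5⟩ := hred _ T rfl
    obtain ⟨f, hf⟩ := count_rep v _ T' h4
    exact ⟨f, by rw [← hs, ← h3, ← h5, ← hf]⟩
  have := Fintype.card_le_of_surjective _ hsurj
  simpa using this

lemma exp_le_pow_aux (φ : ℝ) (hφ : 0 ≤ φ) (j : ℕ) (hj : 1 ≤ j) (h : φ ≤ 8 * j) :
    Real.exp (φ / 16) ≤ (1 + φ / (8 * j)) ^ j := by
  have hj0 : (0 : ℝ) < j := by exact_mod_cast hj
  set t : ℝ := φ / (8 * j) with ht
  have ht0 : 0 ≤ t := by positivity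
  have ht1 : t ≤ 1 := by rw [ht, div_le_one (by positivity)]; exact h
  have h1 : Real.exp (t / 2) ≤ 1 + t := by
    have h3 : 1 - t / 2 ≤ Real.exp (-(t / 2)) := by
      have := Real.add_one_le_exp (-(t / 2)); linarith
    rw [Real.exp_neg] at h3
    have hpos := Real.exp_pos (t / 2)
    have h4 : (1 - t / 2) * Real.exp (t / 2) ≤ 1 := by
      calc _ ≤ (Real.exp (t / 2))⁻¹ * Real.exp (t / 2) := by gcongr
        _ = 1 := inv_mul_cancel₀ hpos.ne'
    have h5 : 1 ≤ (1 - t / 2) * (1 + t) := by nlinarith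
    have h6 : 0 < 1 - t / 2 := by linarith
    exact le_of_mul_le_mul_left (h4.trans h5) h6
  calc Real.exp (φ / 16) = Real.exp (j * (t / 2)) := by
        congr 1; rw [ht]; field_simp; ring
    _ = Real.exp (t / 2) ^ j := by rw [Real.exp_nat_mul]
    _ ≤ _ := by gcongr

lemma two_mul_le_two_pow (q : ℕ) (hq : 1 ≤ q) : q ≤ 2 ^ (q - 1) := by
  obtain ⟨p, rfl⟩ : ∃ p, q = p + 1 := ⟨q - 1, by omega⟩
  simp only [Nat.add_sub_cancel]
  exact Nat.lt_two_pow_self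

/-- `q * y ^ (q-1) ≤ 1` when `2 q y ^ q ≤ 1`. -/
lemma q_root_bound (q : ℕ) (hq : 2 ≤ q) (y : ℝ) (hy : 0 ≤ y) (h : 2 * q * y ^ q ≤ 1) :
    q * y ^ (q - 1) ≤ 1 := by
  have hqp : (0 : ℝ) < q := by positivity
  have h0 : 0 ≤ q * y ^ (q - 1) := by positivity
  rw [← pow_le_one_iff_of_nonneg h0 (show q ≠ 0 by omega)]
  have e : (q * y ^ (q - 1)) ^ q * 2 ^ (q - 1) = q * (2 * q * y ^ q) ^ (q - 1) := by
    obtain ⟨p, rfl⟩ : ∃ p, q = p + 1 := ⟨q - 1, by omega⟩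
    simp only [Nat.add_sub_cancel]
    ring
  have h1 : (q * y ^ (q - 1)) ^ q * 2 ^ (q - 1) ≤ 1 * (2 : ℝ) ^ (q - 1) := by
    rw [e]
    have h3 : (2 * q * y ^ q) ^ (q - 1) ≤ 1 := pow_le_one₀ (by positivity) h
    have h4 : (q : ℝ) ≤ 2 ^ (q - 1) := by exact_mod_cast two_mul_le_two_pow q (by omega)
    nlinarith
  exact le_of_mul_le_mul_right h1 (by positivity)

open Finset in
lemma delta_le {n q : ℕ} (δ : ℝ) (hn : 0 < n) (H : Finset (Finset (Fin n)))
    (hc : ∀ e ∈ H, e.card = q + q + 1)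
    (hd : ∀ e ∈ H, ∀ e' ∈ H, e ≠ e' → Disjoint e e') (hδ : δ * n ≤ H.card) (hδ0 : 0 < δ) :
    2 * q * δ ≤ 1 := by
  have h1 : (H.biUnion id).card = ∑ e ∈ H, e.card := card_biUnion (fun e he e' he' hne => hd e he e' he' hne)
  have h3 : (H.biUnion id).card ≤ n := by simpa using card_le_univ (H.biUnion id)
  rw [h1, sum_congr rfl hc, sum_const, smul_eq_mul] at h3
  have h4 : (H.card : ℝ) * (q + q + 1) ≤ n := by exact_mod_cast h3
  have hnR : (0 : ℝ) < n := by exact_mod_cast hn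
  have h5 : δ * n * (q + q + 1) ≤ n := le_trans (by gcongr) h4
  have h6 : n * (2 * q * δ) ≤ (n : ℝ) * 1 := by nlinarith [mul_pos hδ0 hnR]
  exact le_of_mul_le_mul_left h6 hnR

lemma log_card_bound (n g q : ℕ) (hn : 3 ≤ n) (hgn : g ≤ n) :
    Real.log (2 * (n.choose g : ℝ) ^ q) ≤ (g * q + 1) * Real.log n := by
  have h0 : 0 < n.choose g := Nat.choose_pos hgn
  have h1 : n.choose g ≤ n ^ g := Nat.choose_le_pow n g
  have h3 : 2 * (n.choose g) ^ q ≤ n ^ (g * q + 1) := by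
    rw [pow_succ, pow_mul, mul_comm]
    exact Nat.mul_le_mul (Nat.pow_le_pow_left h1 q) (by omega)
  have h4 : 2 * (n.choose g : ℝ) ^ q ≤ (n : ℝ) ^ (g * q + 1) := by exact_mod_cast h3
  have h5 : (0 : ℝ) < n.choose g := by exact_mod_cast h0
  calc _ ≤ Real.log ((n : ℝ) ^ (g * q + 1)) := Real.log_le_log (by positivity) h4
    _ = _ := by rw [Real.log_pow]; push_cast; ring

set_option maxHeartbeats 1600000 in
lemma main_q {n k q : ℕ} (δ : ℝ) (hq : 2 ≤ q) (hn : 3 ≤ n) (hδ0 : 0 < δ) (hδ1 : δ < 1)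
    (v : Fin n → Fin k → ZMod 2) (H : Fin n → Finset (Finset (Fin n)))
    (hspan : Submodule.span (ZMod 2) (Set.range v) = ⊤)
    (hc : ∀ s, ∀ e ∈ H s, e.card = q + q + 1)
    (hd : ∀ s, ∀ e ∈ H s, ∀ e' ∈ H s, e ≠ e' → Disjoint e e')
    (hH : ∀ s, δ * n ≤ ((H s).card : ℝ))
    (hs : ∀ s, ∀ e ∈ H s, v s = ∑ x ∈ e, v x) :
    (k : ℝ) ≤ 200000 * δ⁻¹ ^ 2 * (n : ℝ) ^ ((1 : ℝ) - 1 / q) * (Real.logb 2 n) ^ 3 := by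
  have hnR : (3 : ℝ) ≤ n := by exact_mod_cast hn
  have hn0 : (0 : ℝ) < n := by linarith
  have hqR : (2 : ℝ) ≤ q := by exact_mod_cast hq
  have hq0 : (0 : ℝ) < q := by linarith
  have h2qd : 2 * q * δ ≤ 1 := delta_le δ (by omega) (H ⟨0, by omega⟩) (hc _) (hd _) (hH _) hδ0
  set L : ℝ := Real.log n with hL
  set ℓ : ℝ := Real.logb 2 n with hℓ
  have hL1 : 1 ≤ L := by
    rw [hL, Real.le_log_iff_exp_le hn0]
    have := Real.exp_one_lt_d9
    linarith
  have hLℓ : L ≤ ℓ := by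
    have h3 : Real.log 2 ≤ 1 := by have := Real.log_two_lt_d9; linarith
    have h4 : 0 < Real.log 2 := Real.log_pos (by norm_num)
    rw [hℓ, Real.logb, le_div_iff₀ h4]
    nlinarith
  have hℓ1 : 1 ≤ ℓ := hL1.trans hLℓ
  -- the root of `δ`
  set y : ℝ := δ ^ ((1 : ℝ) / q) with hy
  have hy0 : 0 < y := Real.rpow_pos_of_pos hδ0 _
  have hyq : y ^ q = δ := by
    rw [hy, ← Real.rpow_natCast, ← Real.rpow_mul hδ0.le, one_div_mul_cancel hq0.ne', Real.rpow_one]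
  set B : ℝ := (n : ℝ) ^ ((1 : ℝ) - 1 / q) with hB
  have hB0 : 0 < B := Real.rpow_pos_of_pos hn0 _
  have hB1 : 1 ≤ B := by
    apply Real.one_le_rpow (by linarith)
    rw [sub_nonneg, div_le_one hq0]; linarith
  have hBq : (B / n) ^ q = 1 / n := by
    have e1 : B / n = (n : ℝ) ^ (-(1 / (q : ℝ))) := by
      rw [hB, sub_eq_add_neg, Real.rpow_add hn0, Real.rpow_one]; field_simp
    rw [e1, ← Real.rpow_natCast, ← Real.rpow_mul hn0.le, neg_mul, one_div_mul_cancel hq0.ne',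
      Real.rpow_neg_one, one_div]
  have hqy : q / y ≤ δ⁻¹ := by
    have h3 := q_root_bound q hq y hy0.le (by rw [hyq]; exact h2qd)
    have h4 : δ = y ^ (q - 1) * y := by
      rw [← pow_succ, show q - 1 + 1 = q by omega, hyq]
    rw [div_le_iff₀ hy0, ← div_eq_inv_mul, le_div_iff₀ hδ0, h4]
    nlinarith
  have hy1 : y ≤ 1 := Real.rpow_le_one hδ0.le hδ1.le (by positivity)
  set A : ℝ := B / y with hA
  have hA0 : 0 < A := by positivity
  have hA1 : 1 ≤ A := by
    rw [hA, le_div_iff₀ hy0]; linarith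
  have hqA : q * A ≤ δ⁻¹ * B := by
    calc q * A = q / y * B := by rw [hA]; ring
      _ ≤ _ := by gcongr
  have hδi : 1 ≤ δ⁻¹ := (one_le_inv₀ hδ0).2 hδ1.le
  have hAq : (A / n) ^ q = 1 / (n * δ) := by
    have : A / n = B / n / y := by rw [hA]; field_simp
    rw [this, div_pow, hBq, hyq]; field_simp
  have hℓ3 : 1 ≤ ℓ ^ 3 := one_le_pow₀ hℓ1
  by_cases hcase : (n : ℝ) < 4 * (q * A)
  · -- trivial regime
    have hkn : k ≤ n := by
      have h1 := finrank_range_le_card (R := ZMod 2) v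
      rw [Set.finrank, hspan] at h1
      simpa using h1
    have hkn' : (k : ℝ) ≤ n := by exact_mod_cast hkn
    have h3 : (k : ℝ) ≤ 4 * (δ⁻¹ * B) := by linarith
    have h4 : δ⁻¹ * B ≤ δ⁻¹ ^ 2 * B * ℓ ^ 3 := by
      have h5 : δ⁻¹ * B ≤ δ⁻¹ * (δ⁻¹ * B) := le_mul_of_one_le_left (by positivity) hδi
      have h6 : δ⁻¹ * (δ⁻¹ * B) ≤ δ⁻¹ * (δ⁻¹ * B) * ℓ ^ 3 := le_mul_of_one_le_right (by positivity) hℓ3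
      nlinarith
    have h7 : 0 ≤ δ⁻¹ ^ 2 * B * ℓ ^ 3 := by positivity
    nlinarith
  · rw [not_lt] at hcase
    set g : ℕ := ⌈A⌉₊ with hg
    have hgA : A ≤ g := Nat.le_ceil A
    have hgA2 : (g : ℝ) ≤ 2 * A := by
      have := Nat.ceil_lt_add_one hA0.le
      linarith
    have hg1 : (1 : ℝ) ≤ g := hA1.trans hgA
    have h2qg : 2 * ((q : ℝ) * g) ≤ n := by
      have := mul_le_mul_of_nonneg_left hgA2 hq0.le
      linarith
    have h2qgN : 2 * (q * g) ≤ n := by exact_mod_cast h2qg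
    have hgn : g ≤ n := by
      have := Nat.le_mul_of_pos_left g (show 0 < q by omega)
      omega
    set π : ℝ := ((g : ℝ) / n) ^ q with hπ
    have hgn0 : 0 < (g : ℝ) / n := by positivity
    have hπ0 : 0 < π := by positivity
    have hπlo : 1 / (n * δ) ≤ π := by
      rw [← hAq, hπ]; gcongr
    have hπhi : π ≤ 1 / 16 := by
      have h4 : (g : ℝ) / n ≤ 1 / 4 := by
        rw [div_le_iff₀ hn0]
        have := mul_le_mul_of_nonneg_right hqR (show (0 : ℝ) ≤ g by linarith)
        linarith
      calc π ≤ (1 / 4 : ℝ) ^ q := by rw [hπ]; gcongr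
        _ ≤ (1 / 4 : ℝ) ^ 2 := pow_le_pow_of_le_one (by norm_num) (by norm_num) hq
        _ = 1 / 16 := by norm_num
    set m : ℕ := ⌊1 / (8 * π)⌋₊ with hm
    have hx2 : 2 ≤ 1 / (8 * π) := by
      rw [le_div_iff₀ (by positivity)]; linarith
    have hm1 : (m : ℝ) ≤ 1 / (8 * π) := Nat.floor_le (by positivity)
    have hm2 : 1 / (8 * π) < m + 1 := Nat.lt_floor_add_one _
    have hxπ : 1 / (8 * π) * π = 1 / 8 := by field_simp
    have hmπ1 : (m : ℝ) * π ≤ 1 / 8 := by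
      rw [← hxπ]; gcongr
    have hmπ2 : 1 / 16 ≤ (m : ℝ) * π := by
      have h3 : 1 / (8 * π) / 2 ≤ m := by linarith
      calc (1 : ℝ) / 16 = 1 / (8 * π) / 2 * π := by
            rw [div_mul_eq_mul_div, hxπ]; norm_num
        _ ≤ _ := by gcongr
    have hmδ : (m : ℝ) ≤ δ * n / 8 := by
      refine hm1.trans ?_
      rw [div_le_iff₀ (by positivity)]
      have h3 : 1 ≤ π * (n * δ) := by rwa [div_le_iff₀ (by positivity)] at hπlo
      have e : δ * n / 8 * (8 * π) = π * (n * δ) := by ring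
      rw [e]; exact h3
    set D : ℕ := ⌊δ * n / 2⌋₊ with hD
    have hD1 : (D : ℝ) ≤ δ * n / 2 := Nat.floor_le (by positivity)
    have hD2 : δ * n / 2 < D + 1 := Nat.lt_floor_add_one _
    set Mb : ℕ := ⌊2 / δ⌋₊ + 1 with hMb
    have hMb1 : (Mb : ℝ) ≤ 3 / δ := by
      have h3 : ((⌊2 / δ⌋₊ : ℕ) : ℝ) ≤ 2 / δ := Nat.floor_le (by positivity)
      have h4 : 3 / δ = 2 / δ + δ⁻¹ := by field_simp; norm_num
      rw [hMb]; push_cast; rw [h4]; linarith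
    have hMb2 : 2 / δ < Mb := by
      rw [hMb]; push_cast; exact Nat.lt_floor_add_one _
    have hDM : n < Mb * (D + 1) := by
      have h3 : (n : ℝ) < Mb * (D + 1) := by
        calc (n : ℝ) = 2 / δ * (δ * n / 2) := by field_simp
          _ < Mb * (D + 1) := by gcongr
      exact_mod_cast h3
    have hgq1 : (1 : ℝ) ≤ g * q :=
      one_le_mul_of_one_le_of_one_le hg1 (by linarith)
    set X : ℝ := 4096 * (g * q) * L ^ 2 with hX
    have hL2 : L ≤ L ^ 2 := le_self_pow₀ hL1 (by norm_num)
    have hp : L ≤ (g * q : ℝ) * L ^ 2 :=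
      hL2.trans (le_mul_of_one_le_left (by positivity) hgq1)
    have hX0 : 4096 * L ≤ X := by
      rw [hX]; linarith
    set j : ℕ := ⌊X⌋₊ + 1 with hj
    have hj1 : X < j := by rw [hj]; push_cast; exact Nat.lt_floor_add_one _
    have hj2 : (j : ℝ) ≤ 4097 * (g * q) * L ^ 2 := by
      have h3 : ((⌊X⌋₊ : ℕ) : ℝ) ≤ X := Nat.floor_le (by linarith)
      have h4 : 1 ≤ (g * q : ℝ) * L ^ 2 := hL1.trans hp
      rw [hj]; push_cast; rw [hX] at h3; linarith
    have hjpos : (0 : ℝ) < j := by linarith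
    set N : ℝ := (n.choose g : ℝ) ^ q with hN
    have hN0 : 0 < N := by
      have : (0 : ℝ) < n.choose g := by exact_mod_cast Nat.choose_pos hgn
      positivity
    have hlog : Real.log (2 * N) ≤ (g * q + 1) * L := log_card_bound n g q hn hgn
    have hblock : ∀ T Bad : Finset (Fin n), T.card = 4 * j → Bad.card ≤ D →
        ∃ W, W ⊆ T ∧ W.Nonempty ∧ ∃ gb : Fin n → Fin n, (∀ s ∈ W, gb s ∉ Bad) ∧
        ∑ s ∈ W, v s = ∑ s ∈ W, v (gb s) := by
      intro T Bad hT hBad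
      have h2 : ∀ x : Fin k → ZMod 2, x + x = 0 := by
        intro x; funext i
        exact CharTwo.add_self_eq_zero (x i)
      refine block h2 (q := q) (g := g) (m := m) (j := j) v H hc hd hs Bad T hT (by omega) ?_
        (by omega) (by omega) h2qgN hmπ2 hmπ1 (64 * L) (by linarith) ?_ ?_
      · intro s
        have h3 := hH s
        have h4 : (Bad.card : ℝ) ≤ D := by exact_mod_cast hBad
        have h5 : (m : ℝ) + Bad.card ≤ (H s).card := by
          have : 0 < δ * n := by positivity
          linarith
        exact_mod_cast h5
      · have h3 : 64 * L * Real.log (2 * N) * 32 < j := by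
          calc 64 * L * Real.log (2 * N) * 32 ≤ 64 * L * ((g * q + 1) * L) * 32 := by gcongr
            _ ≤ 64 * L * ((2 * (g * q)) * L) * 32 := by gcongr; linarith
            _ = X := by rw [hX]; ring
            _ < j := hj1
        have h4 := mul_lt_mul_of_pos_left h3 hN0
        linarith
      · refine lt_of_lt_of_le ?_ (exp_le_pow_aux (64 * L) (by linarith) j (by omega) (by linarith))
        have e1 : Real.exp (64 * L / 16) = (n : ℝ) ^ 4 := by
          rw [show 64 * L / 16 = (4 : ℕ) * L by push_cast; ring, Real.exp_nat_mul, hL, Real.exp_log hn0]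
        rw [e1]
        have hLn : L ≤ n := (Real.log_le_sub_one_of_pos hn0).trans (by linarith)
        have h3 : (g * q + 1 : ℝ) ≤ n := by linarith
        have h4 : (g * q + 1) * L ≤ (n : ℝ) * n := by gcongr
        have h5 : (n : ℝ) ^ 4 = (n * n) * (n * n) := by ring
        have h6 : (9 : ℝ) ≤ n * n := by nlinarith
        have h7 : 9 * ((n : ℝ) * n) ≤ (n * n) * (n * n) := by gcongr
        rw [h5]
        linarith
    have hfin := dim_bound v hspan hblock hDM
    have hfin' : (2 : ℝ) ^ k ≤ ((n : ℝ) + 1) ^ (Mb * (4 * j)) := by exact_mod_cast hfin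
    have hk : (k : ℝ) ≤ (Mb * (4 * j) : ℝ) * Real.logb 2 (n + 1) := by
      have h3 := Real.logb_le_logb_of_le (b := 2) (by norm_num) (by positivity) hfin'
      rw [Real.logb_pow, Real.logb_pow, Real.logb_self_eq_one (by norm_num)] at h3
      push_cast at h3
      linarith
    have hlog2 : Real.logb 2 ((n : ℝ) + 1) ≤ 2 * ℓ := by
      have h3 : (n : ℝ) + 1 ≤ n ^ 2 := by nlinarith
      have h4 := Real.logb_le_logb_of_le (b := 2) (by norm_num) (by positivity) h3
      rw [Real.logb_pow] at h4
      exact_mod_cast h4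
    have hlog3 : 0 ≤ Real.logb 2 ((n : ℝ) + 1) := Real.logb_nonneg (by norm_num) (by linarith)
    have hLL : L ^ 2 ≤ ℓ ^ 2 := by gcongr
    calc (k : ℝ) ≤ (Mb * (4 * j) : ℝ) * Real.logb 2 (n + 1) := hk
      _ ≤ (3 / δ * (4 * (4097 * (g * q) * L ^ 2))) * (2 * ℓ) := by gcongr
      _ ≤ (3 / δ * (4 * (4097 * (2 * A * q) * ℓ ^ 2))) * (2 * ℓ) := by gcongr
      _ = 196656 * (δ⁻¹ * (q * A) * ℓ ^ 3) := by rw [div_eq_mul_inv]; ring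
      _ ≤ 196656 * (δ⁻¹ * (δ⁻¹ * B) * ℓ ^ 3) := by gcongr
      _ ≤ 200000 * (δ⁻¹ * (δ⁻¹ * B) * ℓ ^ 3) := by gcongr; norm_num
      _ = _ := by ring

/-- There is an absolute constant `C > 0` such that for every odd `r ≥ 5`,
any binary linear `(r,δ)`-LCC of block length `n ≥ 3` and dimension `k ≥ 1`
satisfies `k ≤ C · δ⁻² · n^{1 - 2/(r-1)} · (log₂ n)³`. -/
theorem stmt3 :
    ∃ C : ℝ, 0 < C ∧
      ∀ (r n k : ℕ) (δ : ℝ), Odd r → 5 ≤ r → 3 ≤ n → 1 ≤ k → 0 < δ → δ < 1 →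
        (∃ (v : Fin n → Fin k → ZMod 2) (H : Fin n → Finset (Finset (Fin n))),
          IsBinaryLCC r δ v H) →
        (k : ℝ) ≤ C * δ⁻¹ ^ 2 * (n : ℝ) ^ ((1 : ℝ) - 2 / ((r : ℝ) - 1)) *
          (Real.logb 2 n) ^ 3 := by
  refine ⟨200000, by norm_num, ?_⟩
  intro r n k δ hr hr5 hn _ hδ0 hδ1 hex
  obtain ⟨v, H, hspan, hc, hd, hH, hs⟩ := hex
  obtain ⟨q, rfl⟩ := hr
  have hq0 : (0 : ℝ) < q := by
    have : 0 < q := by omega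
    exact_mod_cast this
  have h := main_q (q := q) δ (by omega) hn hδ0 hδ1 v H hspan
    (fun s e he => by rw [hc s e he]; ring) hd hH hs
  have e : (1 : ℝ) - 2 / (((2 * q + 1 : ℕ) : ℝ) - 1) = 1 - 1 / q := by
    push_cast
    field_simp
    ring
  rw [e]
  exact h
end

section
/- There exists an absolute constant C > 0 such that the following holds. Let r ≥ 3 be an integer, δ ∈ (0,1), n ≥ 3, and let K be a natural number with the property that for every m ≥ K and every family G_1,…,G_m of (r−1)-uniform matchings over [n] with |G_i| ≥ (δ/2)·n for all i ∈ [m], there exists a rainbow even cover of G_1,…,G_m. Then every binary linear (r,δ)-LCC of block length n and dimension k satisfies k ≤ C · δ^{-1} · log₂ n · K. -/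
/-- A rainbow even cover of hypergraphs `G 1, …, G m` over `[n]`: a nonempty
set `S` of indices together with a choice of one hyperedge `E i ∈ G i` for each
`i ∈ S` whose symmetric difference is empty, i.e. every point of `[n]` lies in
an even number of the chosen hyperedges. -/
def HasRainbowEvenCover {n m : ℕ} (G : Fin m → Finset (Finset (Fin n))) : Prop :=
  ∃ S : Finset (Fin m), S.Nonempty ∧ ∃ E : Fin m → Finset (Fin n),
    (∀ i ∈ S, E i ∈ G i) ∧ ∀ x : Fin n, Even ((S.filter fun i => x ∈ E i).card)

/-- `w` is a sum of exactly `t` rows. -/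
def RepSum {n k : ℕ} (v : Fin n → Fin k → ZMod 2) (t : ℕ) (w : Fin k → ZMod 2) : Prop :=
  ∃ f : Fin t → Fin n, ∑ i, v (f i) = w

theorem RepSum.add {n k : ℕ} {v : Fin n → Fin k → ZMod 2} {s t : ℕ} {x y : Fin k → ZMod 2}
    (hx : RepSum v s x) (hy : RepSum v t y) : RepSum v (s + t) (x + y) := by
  obtain ⟨f, rfl⟩ := hx
  obtain ⟨g, rfl⟩ := hy
  refine ⟨Fin.append f g, ?_⟩
  rw [Fin.sum_univ_add]
  simp

theorem RepSum.finset {n k : ℕ} {v : Fin n → Fin k → ZMod 2} {ι : Type*}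
    (A : Finset ι) (g : ι → Fin n) : RepSum v A.card (∑ i ∈ A, v (g i)) := by
  refine ⟨fun j => g (A.equivFin.symm j), ?_⟩
  rw [Equiv.sum_comp A.equivFin.symm (fun j : A => v (g j))]
  exact Finset.sum_coe_sort A (fun j => v (g j))

theorem RepSum.blocks {n k : ℕ} {v : Fin n → Fin k → ZMod 2} {ι : Type*} [DecidableEq ι]
    (K : ℕ) (x : ι → Fin k → ZMod 2) (hx : ∀ a, RepSum v K (x a))
    (A : Finset ι) : RepSum v (A.card * K) (∑ i ∈ A, x i) := by
  induction A using Finset.induction_on with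
  | empty => exact ⟨fun j => absurd j.2 (by simp), by
      apply Finset.sum_eq_zero; intro j; exact absurd j.2 (by simp)⟩
  | insert a A ha ih =>
    rw [Finset.sum_insert ha, Finset.card_insert_of_notMem ha]
    have := (hx a).add ih
    rwa [show (A.card + 1) * K = K + A.card * K by ring]

theorem vec_add_self {k : ℕ} (x : Fin k → ZMod 2) : x + x = 0 := by
  ext i
  exact CharTwo.add_self_eq_zero _

theorem cover_sum {n m k : ℕ} (v : Fin n → Fin k → ZMod 2) (S : Finset (Fin m))
    (E : Fin m → Finset (Fin n))
    (hE : ∀ x : Fin n, Even ((S.filter fun i => x ∈ E i).card)) :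
    ∑ i ∈ S, ∑ a ∈ E i, v a = 0 := by
  have h1 : ∀ i ∈ S, ∑ a ∈ E i, v a = ∑ a, if a ∈ E i then v a else 0 := by
    intro i _
    rw [← Finset.sum_filter]
    congr 1
    ext; simp
  rw [Finset.sum_congr rfl h1, Finset.sum_comm]
  apply Finset.sum_eq_zero
  intro a _
  rw [← Finset.sum_filter, Finset.sum_const]
  obtain ⟨c, hc⟩ := hE a
  rw [hc, add_smul, vec_add_self]

open Classical in
theorem down_large {r n k K : ℕ} {δ : ℝ} (hr : 3 ≤ r)
    (hK : ∀ m : ℕ, K ≤ m → ∀ G : Fin m → Finset (Finset (Fin n)),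
          (∀ i, ∀ e ∈ G i, e.card = r - 1) →
          (∀ i, ∀ e ∈ G i, ∀ e' ∈ G i, e ≠ e' → Disjoint e e') →
          (∀ i, δ / 2 * n ≤ ((G i).card : ℝ)) →
          HasRainbowEvenCover G)
    {v : Fin n → Fin k → ZMod 2} {H : Fin n → Finset (Finset (Fin n))}
    (hL : IsBinaryLCC r δ v H) (J : Fin K → Fin n) :
    δ / 2 * n ≤ ((Finset.univ.filter
      (fun u : Fin n => RepSum v (K - 1) (∑ i, v (J i) + v u))).card : ℝ) := by
  obtain ⟨-, hcard, hdisj, hsize, hsum⟩ := hL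
  set D := Finset.univ.filter
      (fun u : Fin n => RepSum v (K - 1) (∑ i, v (J i) + v u)) with hD
  by_contra hlt
  push Not at hlt
  -- the point chosen for an edge
  have hp' : ∃ p : Finset (Fin n) → Option (Fin n), ∀ C, (∃ u ∈ C, u ∉ D) →
      ∃ u, p C = some u ∧ u ∈ C ∧ u ∉ D := by
    refine ⟨fun C => if h : ∃ u ∈ C, u ∉ D then some h.choose else none, fun C h => ?_⟩
    exact ⟨h.choose, by simp only [dif_pos h], h.choose_spec⟩
  obtain ⟨p, hp⟩ := hp'
  let F : Fin K → Finset (Finset (Fin n)) := fun i =>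
    (H (J i)).filter (fun C => ∃ u ∈ C, u ∉ D)
  let T : Finset (Fin n) → Finset (Fin n) := fun C => C.filter (fun u => p C ≠ some u)
  have hT : ∀ C, (∃ u ∈ C, u ∉ D) → ∃ u ∈ C, u ∉ D ∧ T C = C.erase u := by
    intro C h
    obtain ⟨u, h1, h2, h3⟩ := hp C h
    refine ⟨u, h2, h3, ?_⟩
    ext x
    simp only [T, h1, Finset.mem_filter, Finset.mem_erase, ne_eq, Option.some.injEq]
    constructor
    · rintro ⟨a, b⟩; exact ⟨fun h => b h.symm, a⟩
    · rintro ⟨a, b⟩; exact ⟨b, fun h => a h.symm⟩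
  have hTsub : ∀ C, T C ⊆ C := fun C => Finset.filter_subset _ _
  have hTcard : ∀ i, ∀ C ∈ F i, (T C).card = r - 1 := by
    intro i C hC
    obtain ⟨hC1, hC2⟩ := Finset.mem_filter.1 hC
    obtain ⟨u, h1, -, h3⟩ := hT C hC2
    rw [h3, Finset.card_erase_of_mem h1, hcard _ _ hC1]
  have hFdisj : ∀ i, ∀ C ∈ F i, ∀ C' ∈ F i, C ≠ C' → Disjoint (T C) (T C') := by
    intro i C hC C' hC' hne
    exact (hdisj _ C (Finset.mem_filter.1 hC).1 C' (Finset.mem_filter.1 hC').1 hne).mono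
      (hTsub _) (hTsub _)
  have hinj : ∀ i, Set.InjOn T (F i : Set (Finset (Fin n))) := by
    intro i C hC C' hC' heq
    by_contra hne
    have h1 := hFdisj i C hC C' hC' hne
    rw [← heq, disjoint_self] at h1
    have h2 := hTcard i C hC
    rw [h1] at h2
    simp at h2
    omega
  obtain ⟨S, ⟨i0, hi0⟩, E, hE, heven⟩ := hK K le_rfl (fun i => (F i).image T)
    (by
      intro i e he
      obtain ⟨C, hC, rfl⟩ := Finset.mem_image.1 he
      exact hTcard i C hC)
    (by
      intro i e he e' he' hne
      obtain ⟨C, hC, rfl⟩ := Finset.mem_image.1 he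
      obtain ⟨C', hC', rfl⟩ := Finset.mem_image.1 he'
      exact hFdisj i C hC C' hC' (fun h => hne (by rw [h])))
    (by
      intro i
      rw [Finset.card_image_of_injOn (hinj i)]
      have h1 : (F i).card + ((H (J i)).filter (fun C => ¬ ∃ u ∈ C, u ∉ D)).card
          = (H (J i)).card := Finset.card_filter_add_card_filter_not _
      have h2 : ((H (J i)).filter (fun C => ¬ ∃ u ∈ C, u ∉ D)).card ≤ D.card := by
        have hch : ∀ C : Finset (Fin n), C ∈ (H (J i)).filter (fun C => ¬ ∃ u ∈ C, u ∉ D) →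
            ∃ u, u ∈ C := by
          intro C hC
          have := hcard _ C (Finset.mem_filter.1 hC).1
          exact Finset.card_pos.1 (by omega)
        choose q hq using (fun C : Finset (Fin n) =>
          show ∃ u : Fin n, C ∈ (H (J i)).filter (fun C => ¬ ∃ u ∈ C, u ∉ D) → u ∈ C by
            by_cases h : C ∈ (H (J i)).filter (fun C => ¬ ∃ u ∈ C, u ∉ D)
            · obtain ⟨u, hu⟩ := hch C h
              exact ⟨u, fun _ => hu⟩
            · exact ⟨J i, fun h' => absurd h' h⟩)
        apply Finset.card_le_card_of_injOn q
        · intro C hC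
          have h3 := hq C hC
          have h4 := (Finset.mem_filter.1 hC).2
          push Not at h4
          exact h4 _ h3
        · intro C hC C' hC' heq
          by_contra hne
          have h3 := hq C hC
          have h4 := hq C' hC'
          rw [← heq] at h4
          exact Finset.disjoint_left.1 (hdisj _ C (Finset.mem_filter.1 hC).1 C'
            (Finset.mem_filter.1 hC').1 hne) h3 h4
      have h3 := hsize (J i)
      have h4 : ((F i).card : ℝ) + (((H (J i)).filter (fun C => ¬ ∃ u ∈ C, u ∉ D)).card : ℝ)
          = (H (J i)).card := by exact_mod_cast h1
      have h5 : ((((H (J i)).filter (fun C => ¬ ∃ u ∈ C, u ∉ D)).card : ℕ) : ℝ) ≤ D.card := by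
        exact_mod_cast h2
      linarith)
  have hu : ∀ i, ∃ u : Fin n, i ∈ S → u ∉ D ∧ v (J i) = v u + ∑ a ∈ E i, v a := by
    intro i
    by_cases hi : i ∈ S
    · obtain ⟨C, hC, hCE⟩ := Finset.mem_image.1 (hE i hi)
      obtain ⟨hC1, hC2⟩ := Finset.mem_filter.1 hC
      obtain ⟨u, h1, h2, h3⟩ := hT C hC2
      refine ⟨u, fun _ => ⟨h2, ?_⟩⟩
      rw [← hCE, h3, hsum _ C hC1, Finset.add_sum_erase _ _ h1]
    · exact ⟨J i, fun h => absurd h hi⟩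
  choose u hu using hu
  have hS : ∑ i ∈ S, v (J i) = ∑ i ∈ S, v (u i) := by
    rw [Finset.sum_congr rfl (fun i hi => (hu i hi).2), Finset.sum_add_distrib,
      cover_sum v S E heven, add_zero]
  let g : Fin K → Fin n := fun i => if i ∈ S then u i else J i
  have hg : ∑ i, v (J i) = ∑ i, v (g i) := by
    rw [← Finset.sum_add_sum_compl S, ← Finset.sum_add_sum_compl S (fun i => v (g i)), hS]
    congr 1
    · exact Finset.sum_congr rfl (fun i hi => by simp [g, hi])
    · exact Finset.sum_congr rfl (fun i hi => by simp [g, Finset.mem_compl.1 hi])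
  apply (hu i0 hi0).1
  rw [hD, Finset.mem_filter]
  refine ⟨Finset.mem_univ _, ?_⟩
  have h6 := RepSum.finset (v := v) (Finset.univ.erase i0) g
  rw [Finset.card_erase_of_mem (Finset.mem_univ _), Finset.card_univ, Fintype.card_fin] at h6
  convert h6 using 1
  rw [hg, ← Finset.add_sum_erase _ _ (Finset.mem_univ i0)]
  have : g i0 = u i0 := by simp [g, hi0]
  rw [this, add_right_comm, vec_add_self, zero_add]

open Classical in
theorem shorten {r n k K m q : ℕ} {δ : ℝ} (hr : 3 ≤ r) (hn : 3 ≤ n) (hK0 : 0 < K)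
    (hm : 1 < m * (δ / 2))
    (hK : ∀ m : ℕ, K ≤ m → ∀ G : Fin m → Finset (Finset (Fin n)),
          (∀ i, ∀ e ∈ G i, e.card = r - 1) →
          (∀ i, ∀ e ∈ G i, ∀ e' ∈ G i, e ≠ e' → Disjoint e e') →
          (∀ i, δ / 2 * n ≤ ((G i).card : ℝ)) →
          HasRainbowEvenCover G)
    {v : Fin n → Fin k → ZMod 2} {H : Fin n → Finset (Finset (Fin n))}
    (hL : IsBinaryLCC r δ v H) (w : Fin k → ZMod 2) (hw : RepSum v (m * K + q) w) :
    ∃ t < m * K + q, RepSum v t w := by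
  obtain ⟨f, rfl⟩ := hw
  rw [Fin.sum_univ_add]
  have hq : RepSum v q (∑ i : Fin q, v (f (Fin.natAdd (m * K) i))) := ⟨_, rfl⟩
  let J : Fin m → Fin K → Fin n := fun a b => f (Fin.castAdd q (finProdFinEquiv (a, b)))
  have hJ : ∑ i : Fin (m * K), v (f (Fin.castAdd q i)) = ∑ a, ∑ b, v (J a b) := by
    rw [← Equiv.sum_comp finProdFinEquiv, Fintype.sum_prod_type]
  rw [hJ]
  let D : Fin m → Finset (Fin n) := fun a => Finset.univ.filter
      (fun u : Fin n => RepSum v (K - 1) (∑ i, v (J a i) + v u))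
  have hD : ∀ a, δ / 2 * n ≤ ((D a).card : ℝ) := fun a => down_large hr hK hL (J a)
  obtain ⟨a, b, hab, u, hua, hub⟩ : ∃ a b, a ≠ b ∧ ∃ u, u ∈ D a ∧ u ∈ D b := by
    by_contra hno
    push Not at hno
    have h1 : (Finset.univ.biUnion D).card = ∑ a, (D a).card :=
      Finset.card_biUnion (fun a _ b _ hab =>
        Finset.disjoint_left.2 (fun u h1 h2 => hno a b hab u h1 h2))
    have h2 : (Finset.univ.biUnion D).card ≤ n := by
      simpa using Finset.card_le_univ (Finset.univ.biUnion D)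
    have h3 : (∑ a, (D a).card : ℝ) ≤ n := by
      rw [h1] at h2; exact_mod_cast h2
    have h4 : ∑ a : Fin m, (δ / 2 * n) ≤ ∑ a, ((D a).card : ℝ) :=
      Finset.sum_le_sum (fun a _ => hD a)
    rw [Finset.sum_const, Finset.card_univ, Fintype.card_fin, nsmul_eq_mul] at h4
    have hn' : (0 : ℝ) < n := by exact_mod_cast (by omega : 0 < n)
    nlinarith
  have ha := (Finset.mem_filter.1 hua).2
  have hb := (Finset.mem_filter.1 hub).2
  have hab2 := ha.add hb
  have hrest := RepSum.blocks (v := v) K (fun a => ∑ b, v (J a b)) (fun a => ⟨_, rfl⟩)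
    ((Finset.univ.erase a).erase b)
  have hbm : b ∈ Finset.univ.erase a := by simp [hab.symm]
  have hc : ((Finset.univ.erase a).erase b).card + 2 = m := by
    have h1 := Finset.card_erase_add_one hbm
    have h2 := Finset.card_erase_add_one (Finset.mem_univ a)
    rw [Finset.card_univ, Fintype.card_fin] at h2
    omega
  generalize ((Finset.univ.erase a).erase b).card = c at hc hrest
  refine ⟨_, ?_, by
    convert (hab2.add hrest).add hq using 2
    rw [← Finset.add_sum_erase _ _ (Finset.mem_univ a), ← Finset.add_sum_erase _ _ hbm,
      add_add_add_comm, vec_add_self, add_zero, add_assoc]⟩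
  rw [← hc, add_mul]
  omega

theorem exists_rep {n k : ℕ} {v : Fin n → Fin k → ZMod 2}
    (h : Submodule.span (ZMod 2) (Set.range v) = ⊤) (w : Fin k → ZMod 2) :
    ∃ t, RepSum v t w := by
  have hw : w ∈ Submodule.span (ZMod 2) (Set.range v) := by rw [h]; trivial
  induction hw using Submodule.span_induction with
  | mem x hx =>
    obtain ⟨i, rfl⟩ := hx
    exact ⟨1, fun _ => i, by simp⟩
  | zero => exact ⟨0, fun j => j.elim0, by simp⟩
  | add x y _ _ hx hy =>
    obtain ⟨s, hs⟩ := hx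
    obtain ⟨t, ht⟩ := hy
    exact ⟨_, hs.add ht⟩
  | smul a x _ hx =>
    have ha : a = 0 ∨ a = 1 := by revert a; decide
    rcases ha with rfl | rfl
    · exact ⟨0, fun j => j.elim0, by simp⟩
    · simpa using hx

theorem count_bound {n k s : ℕ} {v : Fin n → Fin k → ZMod 2}
    (h : ∀ w, ∃ t ≤ s, RepSum v t w) : 2 ^ k ≤ (n + 1) ^ s := by
  have hsurj : Function.Surjective (fun g : Fin s → Option (Fin n) =>
      ∑ i, (g i).elim 0 v) := by
    intro w
    obtain ⟨t, ht, f, rfl⟩ := h w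
    obtain ⟨d, rfl⟩ := Nat.exists_eq_add_of_le ht
    refine ⟨Fin.append (fun i => some (f i)) (fun _ => none), ?_⟩
    simp [Fin.sum_univ_add]
  have := Fintype.card_le_of_surjective _ hsurj
  simpa using this

/-- There is an absolute constant `C > 0` such that: if `K` is such that every
family of at least `K` many `(r-1)`-uniform matchings over `[n]`, each of size
at least `(δ/2)·n`, admits a rainbow even cover, then every binary linear
`(r,δ)`-LCC of block length `n` and dimension `k` satisfies
`k ≤ C · δ⁻¹ · log₂ n · K`. -/
theorem stmt4 :
    ∃ C : ℝ, 0 < C ∧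
      ∀ (r n k K : ℕ) (δ : ℝ), 3 ≤ r → 0 < δ → δ < 1 → 3 ≤ n →
        (∀ m : ℕ, K ≤ m → ∀ G : Fin m → Finset (Finset (Fin n)),
          (∀ i, ∀ e ∈ G i, e.card = r - 1) →
          (∀ i, ∀ e ∈ G i, ∀ e' ∈ G i, e ≠ e' → Disjoint e e') →
          (∀ i, δ / 2 * n ≤ ((G i).card : ℝ)) →
          HasRainbowEvenCover G) →
        ∀ (v : Fin n → Fin k → ZMod 2) (H : Fin n → Finset (Finset (Fin n))),
          IsBinaryLCC r δ v H →
          (k : ℝ) ≤ C * δ⁻¹ * Real.logb 2 n * K := by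
  refine ⟨6, by norm_num, ?_⟩
  intro r n k K δ hr hδ hδ1 hn hK v H hL
  have hK0 : 0 < K := by
    rcases Nat.eq_zero_or_pos K with rfl | h
    · obtain ⟨S, ⟨i, _⟩, _⟩ := hK 0 le_rfl (fun i => i.elim0) (fun i => i.elim0)
        (fun i => i.elim0) (fun i => i.elim0)
      exact i.elim0
    · exact h
  set m := ⌊2 / δ⌋₊ + 1 with hmdef
  have hm1 : 2 / δ < m := by
    rw [hmdef]; push_cast; exact Nat.lt_floor_add_one _
  have hm2 : (m : ℝ) ≤ 3 / δ := by
    have h1 : (⌊2 / δ⌋₊ : ℝ) ≤ 2 / δ := Nat.floor_le (by positivity)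
    have h2 : 1 ≤ 1 / δ := by rw [le_div_iff₀ hδ]; linarith
    have h3 : 3 / δ = 2 / δ + 1 / δ := by ring
    rw [hmdef, h3]; push_cast; linarith
  have hm : 1 < m * (δ / 2) := by
    rw [div_lt_iff₀ hδ] at hm1; linarith
  have hall : ∀ w, ∃ t ≤ m * K, RepSum v t w := by
    intro w
    classical
    have hex := exists_rep hL.1 w
    refine ⟨Nat.find hex, ?_, Nat.find_spec hex⟩
    by_contra hlt
    push Not at hlt
    obtain ⟨q, hq⟩ := Nat.exists_eq_add_of_le hlt.le
    have hs := Nat.find_spec hex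
    rw [hq] at hs
    obtain ⟨t, ht, hr'⟩ := shorten hr hn hK0 hm hK hL w hs
    rw [← hq] at ht
    exact Nat.find_min hex ht hr'
  have hcount := count_bound hall
  have hn2 : n + 1 ≤ n ^ 2 := by nlinarith
  have h1 : (2 : ℝ) ^ k ≤ (n : ℝ) ^ (2 * (m * K)) := by
    have : 2 ^ k ≤ n ^ (2 * (m * K)) := by
      rw [pow_mul]
      exact hcount.trans (Nat.pow_le_pow_left hn2 _)
    exact_mod_cast this
  have h2 := Real.logb_le_logb_of_le (b := 2) (by norm_num) (by positivity) h1
  rw [Real.logb_pow, Real.logb_pow, Real.logb_self_eq_one (by norm_num)] at h2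
  push_cast at h2
  have hlog : 0 ≤ Real.logb 2 n :=
    Real.logb_nonneg (by norm_num) (by exact_mod_cast (by omega : 1 ≤ n))
  have h3 : (m : ℝ) * (Real.logb 2 n * K) ≤ 3 / δ * (Real.logb 2 n * K) :=
    mul_le_mul_of_nonneg_right hm2 (by positivity)
  have h4 : 6 * δ⁻¹ * Real.logb 2 n * K = 2 * (3 / δ * (Real.logb 2 n * K)) := by
    rw [div_eq_mul_inv]; ring
  rw [h4]
  linarith
end

section
/- Let c₀ > 0 be a rainbow-cycle constant and let B ≥ 2·c₀·δ^{-1}·log₂ n·log₂log₂ n. Let n ≥ 3, δ ∈ (0,1), and let M ∈ F_2^{n×k} with rows v_1,…,v_n be (together with matchings H_1,…,H_n) a binary linear (3,δ)-LCC of block length n and dimension k. Suppose that for every set T ⊆ [n] with |T| ≥ B, the set W_T of indices j ∈ [n] for which there exists a finite multiset T' of elements of [n] containing j with |T'| ≤ |T| and Σ_{t∈T} v_t = Σ_{t∈T'} v_t satisfies |W_T| ≥ (δ/2)·n. Then for every x ∈ F_2^k there exists a subset I ⊆ [n] with |I| < ⌈4/δ⌉·(B+1) and x = Σ_{i∈I}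 v_i. -/
/-- `c₀ > 0` is a rainbow-cycle constant: for every `N ≥ 3`, every finite index
set (modeled as `Fin τ`), every `N`-element vertex set `V`, and every assignment
of a matching `M t` of `2`-element subsets of `V` to each index `t`, if
`Σ_t |M t| ≥ c₀·N·log₂ N·log₂ log₂ N` then some nonempty subfamily, with one
edge chosen per index, has empty symmetric difference (equivalently, every
vertex lies in an even number of the chosen edges): a rainbow cycle. -/
def IsRainbowCycleConst (c₀ : ℝ) : Prop :=
  ∀ (N : ℕ), 3 ≤ N →
    ∀ (τ : ℕ) (V : Type) [Fintype V] [DecidableEq V], Fintype.card V = N →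
      ∀ M : Fin τ → Finset (Finset V),
        (∀ t, ∀ e ∈ M t, e.card = 2) →
        (∀ t, ∀ e ∈ M t, ∀ e' ∈ M t, e ≠ e' → Disjoint e e') →
        c₀ * N * Real.logb 2 N * Real.logb 2 (Real.logb 2 N) ≤
          ((∑ t : Fin τ, (M t).card : ℕ) : ℝ) →
        ∃ S : Finset (Fin τ), S.Nonempty ∧ ∃ e : Fin τ → Finset V,
          (∀ t ∈ S, e t ∈ M t) ∧
          ∀ x : V, Even ((S.filter fun t => x ∈ e t).card)

/-- If, for a binary linear `(3,δ)`-LCC with rows `v i` and for a parameter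
`B ≥ 2·c₀·δ⁻¹·log₂ n·log₂ log₂ n`, every set `T ⊆ [n]` with `|T| ≥ B` has its
"shift set" `W_T` of size at least `(δ/2)·n`, then every `x ∈ F₂ᵏ` is a sum of
fewer than `⌈4/δ⌉·(B+1)` of the rows `v i`. -/
theorem stmt7 (c₀ : ℝ) (hc₀ : 0 < c₀) (hrc : IsRainbowCycleConst c₀)
    (n k : ℕ) (δ : ℝ) (hn : 3 ≤ n) (hδ0 : 0 < δ) (hδ1 : δ < 1)
    (B : ℝ) (hB : 2 * c₀ * δ⁻¹ * Real.logb 2 n * Real.logb 2 (Real.logb 2 n) ≤ B)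
    (v : Fin n → Fin k → ZMod 2) (H : Fin n → Finset (Finset (Fin n)))
    (hlcc : IsBinaryLCC 3 δ v H)
    (hW : ∀ T : Finset (Fin n), B ≤ (T.card : ℝ) →
      δ / 2 * n ≤
        (({j : Fin n | ∃ T' : Multiset (Fin n), j ∈ T' ∧ Multiset.card T' ≤ T.card ∧
            ∑ t ∈ T, v t = (T'.map v).sum}).ncard : ℝ)) :
    ∀ x : Fin k → ZMod 2, ∃ I : Finset (Fin n),
      (I.card : ℝ) < (⌈4 / δ⌉ : ℝ) * (B + 1) ∧ x = ∑ i ∈ I, v i := by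
  classical
  intro x
  have hself : ∀ y : Fin k → ZMod 2, y + y = 0 := by
    intro y
    funext i
    exact CharTwo.add_self_eq_zero (y i)
  -- every vector is a multiset sum
  have hex : ∃ c : ℕ, ∃ S : Multiset (Fin n), Multiset.card S = c ∧ (S.map v).sum = x := by
    have hx : x ∈ Submodule.span (ZMod 2) (Set.range v) := by
      rw [hlcc.1]; trivial
    suffices h : ∃ S : Multiset (Fin n), (S.map v).sum = x by
      obtain ⟨S, hS⟩ := h
      exact ⟨_, S, rfl, hS⟩
    induction hx using Submodule.span_induction with
    | mem y hy =>
      obtain ⟨i, rfl⟩ := hy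
      exact ⟨{i}, by simp⟩
    | zero => exact ⟨0, by simp⟩
    | add y z _ _ hy hz =>
      obtain ⟨S, hS⟩ := hy
      obtain ⟨S', hS'⟩ := hz
      exact ⟨S + S', by simp [hS, hS']⟩
    | smul a y _ hy =>
      obtain ⟨S, hS⟩ := hy
      have ha : a = 0 ∨ a = 1 := by
        revert a; decide
      rcases ha with rfl | rfl
      · exact ⟨0, by simp⟩
      · exact ⟨S, by simp [hS]⟩
  obtain ⟨S, hSc, hSx⟩ := Nat.find_spec hex
  have hmin : ∀ S' : Multiset (Fin n), (S'.map v).sum = x →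
      Multiset.card S ≤ Multiset.card S' := by
    intro S' hS'
    rw [hSc]
    exact Nat.find_min' hex ⟨S', rfl, hS'⟩
  have hnd : S.Nodup := by
    rw [Multiset.nodup_iff_ne_cons_cons]
    rintro a t rfl
    have h1 := hmin t (by
      rw [← hSx]
      simp only [Multiset.map_cons, Multiset.sum_cons]
      rw [← add_assoc, hself, zero_add])
    simp at h1
  obtain ⟨I, rfl⟩ : ∃ I : Finset (Fin n), I.val = S := ⟨⟨S, hnd⟩, rfl⟩
  refine ⟨I, ?_, hSx.symm⟩
  by_contra hcon
  push Not at hcon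
  have hnR : (3 : ℝ) ≤ n := by exact_mod_cast hn
  have hl1 : 1 < Real.logb 2 n := by
    rw [Real.lt_logb_iff_rpow_lt (by norm_num) (by linarith)]
    norm_num
    linarith
  have hl2 : 0 < Real.logb 2 (Real.logb 2 n) := Real.logb_pos (by norm_num) hl1
  have hBpos : 0 < B := by
    refine lt_of_lt_of_le ?_ hB
    have : 0 < Real.logb 2 n := by linarith
    positivity
  obtain ⟨m, hm⟩ : ∃ m : ℕ, (m : ℤ) = ⌈4 / δ⌉ :=
    ⟨(⌈4 / δ⌉).toNat, Int.toNat_of_nonneg (Int.ceil_nonneg (by positivity))⟩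
  have hmR : ((⌈4 / δ⌉ : ℤ) : ℝ) = (m : ℝ) := by rw [← hm]; simp
  have hm4 : 4 ≤ m * δ := by
    have := Int.le_ceil (4 / δ)
    rw [hmR] at this
    exact (div_le_iff₀ hδ0).1 this
  set b := ⌈B⌉₊ with hb
  have hbB : B ≤ b := Nat.le_ceil B
  have hbB1 : (b : ℝ) < B + 1 := Nat.ceil_lt_add_one hBpos.le
  have hmb : m * b ≤ I.card := by
    rw [hmR] at hcon
    have : (m : ℝ) * b ≤ I.card :=
      le_trans (mul_le_mul_of_nonneg_left hbB1.le (Nat.cast_nonneg m)) hcon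
    exact_mod_cast this
  -- disjoint blocks
  have hemb : Nonempty (Fin m × Fin b ↪ I) := by
    apply Function.Embedding.nonempty_of_card_le
    simpa using hmb
  obtain ⟨f⟩ := hemb
  let T : Fin m → Finset (Fin n) := fun i => Finset.univ.image fun j => (f (i, j) : Fin n)
  have hTc : ∀ i, (T i).card = b := by
    intro i
    rw [Finset.card_image_of_injective]
    · simp
    · intro j j' h
      have := f.injective (Subtype.ext h)
      simpa using this
  have hTI : ∀ i, T i ⊆ I := by
    intro i y hy
    simp only [T, Finset.mem_image] at hy
    obtain ⟨j, _, rfl⟩ := hy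
    exact (f (i, j)).2
  have hTd : ∀ i i', i ≠ i' → Disjoint (T i) (T i') := by
    intro i i' hii
    rw [Finset.disjoint_left]
    intro y hy hy'
    simp only [T, Finset.mem_image] at hy hy'
    obtain ⟨j, _, rfl⟩ := hy
    obtain ⟨j', _, h⟩ := hy'
    have := f.injective (Subtype.ext h)
    simp only [Prod.mk.injEq] at this
    exact hii this.1.symm
  let W : Fin m → Finset (Fin n) := fun i => Finset.univ.filter fun j =>
    ∃ T' : Multiset (Fin n), j ∈ T' ∧ Multiset.card T' ≤ (T i).card ∧
      ∑ t ∈ T i, v t = (T'.map v).sum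
  have hWc : ∀ i, δ / 2 * n ≤ ((W i).card : ℝ) := by
    intro i
    have h := hW (T i) (by rw [hTc]; exact hbB)
    rw [← Set.ncard_coe_finset]
    simpa [W] using h
  have hpig : ∃ i i', i ≠ i' ∧ ¬ Disjoint (W i) (W i') := by
    by_contra hno
    push Not at hno
    have h1 : (Finset.univ.biUnion W).card = ∑ i, (W i).card :=
      Finset.card_biUnion fun i _ i' _ h => hno i i' h
    have h2 : (Finset.univ.biUnion W).card ≤ n := by
      simpa using Finset.card_le_univ (Finset.univ.biUnion W)
    have h3 : ∑ _i : Fin m, (δ / 2 * n) ≤ ∑ i, ((W i).card : ℝ) :=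
      Finset.sum_le_sum fun i _ => hWc i
    have h4 : ∑ i, ((W i).card : ℝ) ≤ n := by
      rw [h1] at h2
      exact_mod_cast h2
    simp only [Finset.sum_const, Finset.card_univ, Fintype.card_fin, nsmul_eq_mul] at h3
    nlinarith
  obtain ⟨i, i', hii, hnd'⟩ := hpig
  rw [Finset.not_disjoint_iff] at hnd'
  obtain ⟨j, hj, hj'⟩ := hnd'
  simp only [W, Finset.mem_filter, Finset.mem_univ, true_and] at hj hj'
  obtain ⟨P, hjP, hPc, hPs⟩ := hj
  obtain ⟨Q, hjQ, hQc, hQs⟩ := hj'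
  obtain ⟨P, rfl⟩ := Multiset.exists_cons_of_mem hjP
  obtain ⟨Q, rfl⟩ := Multiset.exists_cons_of_mem hjQ
  have hsub : T i ∪ T i' ⊆ I := Finset.union_subset (hTI i) (hTI i')
  have hcard := Finset.card_sdiff_add_card_eq_card hsub
  rw [Finset.card_union_of_disjoint (hTd i i' hii)] at hcard
  have hsum : ∑ t ∈ I \ (T i ∪ T i'), v t + ∑ t ∈ T i ∪ T i', v t = ∑ t ∈ I, v t :=
    Finset.sum_sdiff hsub
  rw [Finset.sum_union (hTd i i' hii), hPs, hQs] at hsum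
  simp only [Multiset.map_cons, Multiset.sum_cons] at hsum
  have hfin := hmin ((I \ (T i ∪ T i')).val + P + Q) (by
    have e : ((((I \ (T i ∪ T i')).val + P + Q).map v).sum) =
        ∑ t ∈ I \ (T i ∪ T i'), v t + (P.map v).sum + (Q.map v).sum := by
      simp [Finset.sum]
    rw [e, ← hSx]
    change _ = ∑ t ∈ I, v t
    rw [← hsum]
    have h0 := hself (v j)
    calc _ = ∑ t ∈ I \ (T i ∪ T i'), v t + (P.map v).sum + (Q.map v).sum + 0 := by rw [add_zero]
      _ = _ := by rw [← h0]; abel)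
  simp only [Multiset.card_add, Multiset.card_cons, Finset.card_val] at hfin hPc hQc
  omega
end

section
/- Let q be a prime power, δ ∈ (0,1), and let M ∈ F_q^{n×k} with rows v_1,…,v_n be (together with matchings H_1,…,H_k) a linear (2,δ)-LDC over F_q of block length n and dimension k. Then for every x ∈ F_q^k there exist indices a_1, a_2 ∈ [n] and nonzero scalars γ_1, γ_2 ∈ F_q such that wt(x + γ_1·v_{a_1} + γ_2·v_{a_2}) ≤ (1 − 2δ/q)·wt(x), where wt denotes Hamming weight (number of nonzero coordinates). -/
/-- A linear `(2, δ)`-LDC over a finite field `F` of block length `n` and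
dimension `k`: a matrix with rows `v 1, …, v n ∈ Fᵏ` together with `2`-uniform
matchings `H i` over `[n]` of size at least `δ·n`, for `i ∈ [k]`, such that for
every pair `{a,b} ∈ H i` there are nonzero `α, β ∈ F` with
`e_i = α·v a + β·v b`, where `e_i` is the `i`-th standard basis vector. -/
def IsLinearLDC2 (F : Type) [Field F] {n k : ℕ} (δ : ℝ)
    (v : Fin n → Fin k → F) (H : Fin k → Finset (Finset (Fin n))) : Prop :=
  (∀ i : Fin k, ∀ e ∈ H i, e.card = 2) ∧
  (∀ i : Fin k, ∀ e ∈ H i, ∀ e' ∈ H i, e ≠ e' → Disjoint e e') ∧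
  (∀ i : Fin k, δ * n ≤ ((H i).card : ℝ)) ∧
  (∀ i : Fin k, ∀ e ∈ H i, ∀ a ∈ e, ∀ b ∈ e, a ≠ b →
    ∃ α β : F, α ≠ 0 ∧ β ≠ 0 ∧
      (Pi.single i (1 : F) : Fin k → F) = α • v a + β • v b)

/-- The vector `γ • v a` attached to a state `(a, γ)`. -/
def ldcVec {F : Type} [Field F] {n k : ℕ} (v : Fin n → Fin k → F)
    (t : Fin n × Fˣ) : Fin k → F := (t.2 : F) • v t.1

theorem ldc_step {F : Type} [Field F] [Fintype F] [DecidableEq F]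
    {n k : ℕ} {δ : ℝ} {v : Fin n → Fin k → F} {H : Fin k → Finset (Finset (Fin n))}
    (hldc : IsLinearLDC2 F δ v H) (i : Fin k) (y : F) (hy : y ≠ 0) :
    ∃ σ : Equiv.Perm (Fin n × Fˣ),
      (∀ t, ∀ j, j ≠ i → ldcVec v (σ t) j = ldcVec v t j) ∧
      2 * δ * n ≤
        ((Finset.univ.filter fun t => ldcVec v (σ t) i = ldcVec v t i - y).card : ℝ) := by
  classical
  obtain ⟨h2, hdisj, hcard, hdec⟩ := hldc
  have key : ∀ a : Fin n, ∃ (b : Fin n) (g : Fˣ) (h : F),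
      v a = (g : F) • v b + h • (Pi.single i (1 : F) : Fin k → F) ∧
      ((∃ e ∈ H i, a ∈ e ∧ b ∈ e ∧ a ≠ b ∧ h ≠ 0) ∨ ((∀ e ∈ H i, a ∉ e) ∧ b = a)) := by
    intro a
    by_cases ha : ∃ e ∈ H i, a ∈ e
    · obtain ⟨e, he, hae⟩ := ha
      obtain ⟨b, hbe, hba⟩ := Finset.exists_mem_ne (by rw [h2 i e he]; norm_num) a
      obtain ⟨α, β, hα, hβ, hs⟩ := hdec i e he a hae b hbe hba.symm
      refine ⟨b, Units.mk0 (-(β / α)) (by simp [hα, hβ]), α⁻¹, ?_,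
        Or.inl ⟨e, he, hae, hbe, hba.symm, inv_ne_zero hα⟩⟩
      rw [hs]
      ext j
      simp
      field_simp
      ring
    · push Not at ha
      exact ⟨a, 1, 0, by simp, Or.inr ⟨ha, rfl⟩⟩
  choose τ g h hv hm using key
  have uniq : ∀ e ∈ H i, ∀ e' ∈ H i, ∀ c, c ∈ e → c ∈ e' → e = e' := by
    intro e he e' he' c hc hc'
    by_contra hne
    exact Finset.disjoint_left.1 (hdisj i e he e' he' hne) hc hc'
  have τinj : Function.Injective τ := by
    intro a a' haa
    rcases hm a with ⟨e, he, hae, hbe, hab, -⟩ | ⟨hu, hb⟩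
    · rcases hm a' with ⟨e', he', hae', hbe', hab', -⟩ | ⟨hu', hb'⟩
      · have := uniq e he e' he' (τ a) hbe (haa ▸ hbe')
        subst this
        by_contra hne
        have h3 : ({a, a', τ a} : Finset (Fin n)) ⊆ e := by
          intro z hz
          simp only [Finset.mem_insert, Finset.mem_singleton] at hz
          rcases hz with rfl | rfl | rfl <;> assumption
        have h4 := Finset.card_le_card h3
        rw [h2 i e he, Finset.card_eq_three.2 ⟨a, a', τ a, hne, hab, haa ▸ hab', rfl⟩] at h4
        omega
      · exact absurd (by rw [← hb', ← haa]; exact hbe) (hu' e he)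
    · rcases hm a' with ⟨e', he', hae', hbe', hab', -⟩ | ⟨hu', hb'⟩
      · exact absurd (by rw [← hb, haa]; exact hbe') (hu e' he')
      · rw [← hb, ← hb', haa]
  let f : Fin n × Fˣ → Fin n × Fˣ := fun t => (τ t.1, t.2 * g t.1)
  have finj : Function.Injective f := by
    rintro ⟨a, c⟩ ⟨a', c'⟩ hf
    simp only [f, Prod.mk.injEq] at hf
    obtain ⟨h1, h2⟩ := hf
    have := τinj h1
    subst this
    simpa using h2
  have hfv : ∀ t : Fin n × Fˣ, ∀ j, ldcVec v (f t) j =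
      ldcVec v t j - (t.2 : F) * h t.1 * (Pi.single i (1 : F) : Fin k → F) j := by
    rintro ⟨a, c⟩ j
    have := congrFun (hv a) j
    simp only [Pi.add_apply, Pi.smul_apply, smul_eq_mul] at this
    simp only [ldcVec, f, Pi.smul_apply, smul_eq_mul, Units.val_mul]
    rw [this]
    ring
  refine ⟨Equiv.ofBijective f (Finite.injective_iff_bijective.1 finj), ?_, ?_⟩
  · intro t j hj
    rw [Equiv.ofBijective_apply, hfv]
    simp [hj]
  · have hc1 : ((H i).biUnion id).card = (H i).card * 2 := by
      rw [Finset.card_biUnion]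
      · exact Finset.sum_const_nat (fun e he => h2 i e he)
      · intro e he e' he' hne
        exact hdisj i e he e' he' hne
    have hh : ∀ a ∈ (H i).biUnion id, h a ≠ 0 := by
      intro a ha
      simp only [Finset.mem_biUnion, id] at ha
      obtain ⟨e, he, hae⟩ := ha
      rcases hm a with ⟨_, _, _, _, _, h0⟩ | ⟨hu, _⟩
      · exact h0
      · exact absurd hae (hu e he)
    have hc2 : ((H i).biUnion id).card ≤ (Finset.univ.filter fun t : Fin n × Fˣ =>
        ldcVec v (f t) i = ldcVec v t i - y).card := by
      apply Finset.card_le_card_of_injOn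
        (fun a => (a, if h0 : h a = 0 then 1 else Units.mk0 (y / h a) (div_ne_zero hy h0)))
      · intro a ha
        have h0 := hh a ha
        simp only [Finset.coe_filter, Finset.mem_univ, true_and, Set.mem_ofPred_eq]
        rw [hfv]
        simp [h0]
      · intro a _ a' _ haa
        exact (Prod.mk.inj haa).1
    rw [hc1] at hc2
    have hc3 : (((H i).card * 2 : ℕ) : ℝ) ≤ _ := Nat.cast_le.2 hc2
    have := hcard i
    push_cast at hc3
    simp only [Equiv.ofBijective_apply]
    linarith

theorem ldc_walk {F : Type} [Field F] [Fintype F] [DecidableEq F]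
    {n k : ℕ} {δ : ℝ} {v : Fin n → Fin k → F} {H : Fin k → Finset (Finset (Fin n))}
    (hldc : IsLinearLDC2 F δ v H) (x : Fin k → F) (s : Finset (Fin k)) :
    (∀ i ∈ s, x i ≠ 0) →
    ∃ π : Equiv.Perm (Fin n × Fˣ),
      (∀ t, ∀ j, j ∉ s → ldcVec v (π t) j = ldcVec v t j) ∧
      ∀ i ∈ s, 2 * δ * n ≤
        ((Finset.univ.filter fun t => ldcVec v (π t) i = ldcVec v t i - x i).card : ℝ) := by
  classical
  induction s using Finset.induction_on with
  | empty => exact fun _ => ⟨1, by simp, by simp⟩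
  | insert i s his ih =>
    intro hx
    obtain ⟨π, hπ1, hπ2⟩ := ih (fun j hj => hx j (Finset.mem_insert_of_mem hj))
    obtain ⟨σ, hσ1, hσ2⟩ := ldc_step hldc i (x i) (hx i (Finset.mem_insert_self i s))
    refine ⟨π.trans σ, ?_, ?_⟩
    · intro t j hj
      rw [Finset.mem_insert, not_or] at hj
      rw [Equiv.trans_apply, hσ1 _ _ hj.1, hπ1 _ _ hj.2]
    · intro j hj
      by_cases hji : j = i
      · subst hji
        refine hσ2.trans (Nat.cast_le.2 ?_)
        apply Finset.card_le_card_of_injOn π.symm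
        · intro t ht
          simp only [Finset.coe_filter, Finset.mem_univ, true_and, Set.mem_ofPred_eq] at ht ⊢
          rw [← hπ1 (π.symm t) _ his, Equiv.trans_apply, Equiv.apply_symm_apply, ht]
        · exact π.symm.injective.injOn
      · have hjs := Finset.mem_of_mem_insert_of_ne hj hji
        simpa [hσ1 _ _ hji] using hπ2 j hjs

/-- Weight contraction for linear `(2,δ)`-LDCs over a finite field `F` of
cardinality `q`: for every `x ∈ F^k` there are indices `a₁, a₂` and nonzero
scalars `γ₁, γ₂` with `wt(x + γ₁·v a₁ + γ₂·v a₂) ≤ (1 - 2δ/q)·wt(x)`. -/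
theorem stmt8 (F : Type) [Field F] [Fintype F] [DecidableEq F]
    (n k : ℕ) (hn : 1 ≤ n) (δ : ℝ) (hδ0 : 0 < δ) (hδ1 : δ < 1)
    (v : Fin n → Fin k → F) (H : Fin k → Finset (Finset (Fin n)))
    (hldc : IsLinearLDC2 F δ v H) :
    ∀ x : Fin k → F, ∃ (a₁ a₂ : Fin n) (γ₁ γ₂ : F), γ₁ ≠ 0 ∧ γ₂ ≠ 0 ∧
      (hammingNorm (x + γ₁ • v a₁ + γ₂ • v a₂) : ℝ) ≤
        (1 - 2 * δ / (Fintype.card F : ℝ)) * (hammingNorm x : ℝ) := by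
  classical
  intro x
  set S : Finset (Fin k) := Finset.univ.filter fun i => x i ≠ 0 with hS
  have hw : hammingNorm x = S.card := rfl
  obtain ⟨π, hπ1, hπ2⟩ := ldc_walk hldc x S (by simp [hS])
  let G : Fin n × Fˣ → Finset (Fin k) := fun t =>
    S.filter fun i => ldcVec v (π t) i = ldcVec v t i - x i
  have hq1 : 1 ≤ Fintype.card F := Fintype.card_pos
  have hq : (0 : ℝ) < Fintype.card F := by exact_mod_cast hq1
  have hsum : ∑ t : Fin n × Fˣ, (2 * δ / (Fintype.card F : ℝ)) * (S.card : ℝ) ≤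
      ∑ t : Fin n × Fˣ, ((G t).card : ℝ) := by
    have h1 : ∑ t : Fin n × Fˣ, ((G t).card : ℝ) = ∑ i ∈ S,
        ((Finset.univ.filter fun t => ldcVec v (π t) i = ldcVec v t i - x i).card : ℝ) := by
      simp only [G, Finset.card_filter, Nat.cast_sum]
      exact Finset.sum_comm
    have h2 : (S.card : ℝ) * (2 * δ * n) ≤ ∑ t : Fin n × Fˣ, ((G t).card : ℝ) := by
      rw [h1, ← nsmul_eq_mul]
      exact Finset.card_nsmul_le_sum _ _ _ hπ2
    refine le_trans ?_ h2
    rw [Finset.sum_const, Finset.card_univ, Fintype.card_prod, Fintype.card_fin,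
      Fintype.card_units, nsmul_eq_mul, Nat.cast_mul, Nat.cast_sub hq1]
    have h3 : ((Fintype.card F : ℝ) - 1) / (Fintype.card F : ℝ) ≤ 1 := by
      rw [div_le_one hq]; linarith
    have h4 : (0 : ℝ) ≤ (S.card : ℝ) * (2 * δ * n) := by positivity
    calc _ = (S.card : ℝ) * (2 * δ * n) *
          (((Fintype.card F : ℝ) - 1) / (Fintype.card F : ℝ)) := by
            push_cast; ring
      _ ≤ _ := mul_le_of_le_one_right h4 h3
  obtain ⟨t, -, ht⟩ := Finset.exists_le_of_sum_le
    (⟨(⟨0, hn⟩, 1), Finset.mem_univ _⟩ : (Finset.univ : Finset (Fin n × Fˣ)).Nonempty) hsum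
  refine ⟨(π t).1, t.1, (π t).2, -t.2, Units.ne_zero _, neg_ne_zero.2 (Units.ne_zero _), ?_⟩
  have hle : hammingNorm (x + ((π t).2 : F) • v (π t).1 + (-(t.2 : F)) • v t.1) ≤
      (S \ G t).card := by
    apply Finset.card_le_card
    intro j hj
    have hj' : x j + ldcVec v (π t) j - ldcVec v t j ≠ 0 := by
      simpa [ldcVec, sub_eq_add_neg] using hj
    have hjS : j ∈ S := by
      by_contra hjS
      have hx0 : x j = 0 := by simpa [hS] using hjS
      apply hj'
      rw [hπ1 t j hjS, hx0]
      ring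
    refine Finset.mem_sdiff.2 ⟨hjS, fun hG => hj' ?_⟩
    rw [(Finset.mem_filter.1 hG).2]
    ring
  have hsub : G t ⊆ S := Finset.filter_subset _ _
  have h5 : (S \ G t).card + (G t).card = S.card := Finset.card_sdiff_add_card_eq_card hsub
  have h6 : ((S \ G t).card : ℝ) + (G t).card = S.card := by exact_mod_cast h5
  have h7 : (hammingNorm (x + ((π t).2 : F) • v (π t).1 + (-(t.2 : F)) • v t.1) : ℝ) ≤
      ((S \ G t).card : ℝ) := Nat.cast_le.2 hle
  rw [hw]
  linarith
end

section
/- There exists an absolute constant c > 0 such that the following holds. Let q be a prime power, δ ∈ (0,1), and let M ∈ F_q^{n×k} with rows v_1,…,v_n be (together with matchings H_1,…,H_k) a linear (2,δ)-LDC over F_q of block length n and dimension k. Then for every x ∈ F_q^k there exist a subset J ⊆ [n] with |J| ≤ c·q·δ^{-1} and a vector y in the F_q-linear span of {v_j : j ∈ J} such that the Hamming distance between x and y is at most k/4. -/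
open Finset in
/-- For every coordinate set `R`, there is a combination `d` of two rows, supported in `R`,
which is nonzero on at least a `δ` fraction of `R`. -/
lemma exists_diff (F : Type) [Field F] [Fintype F] [DecidableEq F]
    (n k : ℕ) (δ : ℝ) (hn : 1 ≤ n)
    (v : Fin n → Fin k → F) (H : Fin k → Finset (Finset (Fin n)))
    (hL : IsLinearLDC2 F δ v H) (R : Finset (Fin k)) :
    ∃ (a b : Fin n) (l m : F), (∀ i, i ∉ R → (l • v a - m • v b) i = 0) ∧
      δ * (#R : ℝ) ≤ (#{i ∈ R | (l • v a - m • v b) i ≠ 0} : ℝ) := by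
  classical
  obtain ⟨h2, hdisj, hcard, hdec⟩ := hL
  let w : Fin n × Fˣ → Fin k → F := fun p => (p.2 : F) • v p.1
  let pat : Fin n × Fˣ → Fin k → F := fun p i => if i ∈ R then 0 else w p i
  let p0 : Fin n × Fˣ := (⟨0, hn⟩, 1)
  let g : (Fin k → F) → Fin n × Fˣ := fun t => if h : ∃ p, pat p = t then h.choose else p0
  have hg : ∀ p, pat (g (pat p)) = pat p := by
    intro p
    have h : ∃ p', pat p' = pat p := ⟨p, rfl⟩
    simp only [g, dif_pos h]
    exact h.choose_spec
  have key : ∀ i ∈ R, δ * n * (Fintype.card Fˣ : ℝ) ≤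
      (#{p : Fin n × Fˣ | w p i ≠ w (g (pat p)) i} : ℝ) := by
    intro i hi
    have hφ : ∀ e, ∃ φ : Fˣ → Fin n × Fˣ, e ∈ H i → (Function.Injective φ ∧
        ∀ l, (φ l).1 ∈ e ∧ w (φ l) i ≠ w (g (pat (φ l))) i) := by
      intro e
      by_cases he : e ∈ H i
      swap
      · exact ⟨fun _ => p0, fun h => absurd h he⟩
      obtain ⟨a, b, hab, rfl⟩ := card_eq_two.1 (h2 i e he)
      obtain ⟨α, β, hα, hβ, hE⟩ := hdec i _ he a (by simp) b (by simp) hab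
      let α' := Units.mk0 α hα
      let β' := Units.mk0 β hβ
      have hone : ∀ l : Fˣ, w (a, l * α') i ≠ w (g (pat (a, l * α'))) i ∨
          w (b, -(l * β')) i ≠ w (g (pat (b, -(l * β')))) i := by
        intro l
        have hdiff : ∀ j, w (a, l * α') j - w (b, -(l * β')) j
            = (l : F) * (Pi.single i (1 : F) : Fin k → F) j := by
          intro j
          rw [hE]
          simp [w, α', β']
          ring
        have hpat : pat (a, l * α') = pat (b, -(l * β')) := by
          funext j
          by_cases hj : j ∈ R
          · simp [pat, hj]
          · have hji : j ≠ i := fun h => hj (h ▸ hi)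
            have := hdiff j
            rw [Pi.single_eq_of_ne hji, mul_zero, sub_eq_zero] at this
            simp only [pat, hj, if_false, this]
        rw [hpat]
        by_contra hcon
        push Not at hcon
        have := hdiff i
        rw [hcon.1, hcon.2, sub_self, Pi.single_eq_same, mul_one] at this
        exact l.ne_zero this.symm
      refine ⟨fun l => if w (a, l * α') i ≠ w (g (pat (a, l * α'))) i then (a, l * α')
        else (b, -(l * β')), fun _ => ⟨?_, ?_⟩⟩
      · intro l l' hll
        dsimp only at hll
        split_ifs at hll with h1 h2 h2
        · simpa using hll
        · exact absurd (congrArg Prod.fst hll) hab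
        · exact absurd (congrArg Prod.fst hll).symm hab
        · simpa using hll
      · intro l
        dsimp only
        split_ifs with h1
        · exact ⟨by simp, h1⟩
        · exact ⟨by simp, (hone l).resolve_left h1⟩
    choose φ hφ using hφ
    have hle : #(H i ×ˢ (univ : Finset Fˣ)) ≤
        #{p : Fin n × Fˣ | w p i ≠ w (g (pat p)) i} := by
      apply card_le_card_of_injOn (fun x => φ x.1 x.2)
      · rintro ⟨e, l⟩ hx
        have he : e ∈ H i := by simpa using hx
        simpa using ((hφ e he).2 l).2
      · rintro ⟨e, l⟩ hx ⟨e', l'⟩ hx' heq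
        have he : e ∈ H i := by simpa using hx
        have he' : e' ∈ H i := by simpa using hx'
        dsimp only at heq
        have hee : e = e' := by
          by_contra hne
          have h1 := ((hφ e he).2 l).1
          have h2 := ((hφ e' he').2 l').1
          rw [← heq] at h2
          exact (Finset.disjoint_left.1 (hdisj i e he e' he' hne)) h1 h2
        subst hee
        rw [(hφ e he).1 heq]
    rw [card_product, card_univ] at hle
    calc δ * n * (Fintype.card Fˣ : ℝ) ≤ (#(H i) : ℝ) * (Fintype.card Fˣ : ℝ) := by
          gcongr
          exact hcard i
      _ ≤ _ := by exact_mod_cast hle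
  -- double counting
  have hsum : ∑ p : Fin n × Fˣ, δ * (#R : ℝ) ≤
      ∑ p : Fin n × Fˣ, (#{i ∈ R | w p i ≠ w (g (pat p)) i} : ℝ) := by
    have hsw : ∑ p : Fin n × Fˣ, (#{i ∈ R | w p i ≠ w (g (pat p)) i} : ℝ) =
        ∑ i ∈ R, (#{p : Fin n × Fˣ | w p i ≠ w (g (pat p)) i} : ℝ) := by
      simp only [card_filter, Nat.cast_sum]
      rw [sum_comm]
    rw [hsw]
    calc ∑ p : Fin n × Fˣ, δ * (#R : ℝ) = ∑ i ∈ R, δ * n * (Fintype.card Fˣ : ℝ) := by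
          simp only [sum_const, card_univ, Fintype.card_prod, Fintype.card_fin, nsmul_eq_mul]
          push_cast
          ring
      _ ≤ _ := sum_le_sum key
  obtain ⟨p, -, hp⟩ := exists_le_of_sum_le ⟨p0, mem_univ _⟩ hsum
  refine ⟨p.1, (g (pat p)).1, p.2, (g (pat p)).2, ?_, ?_⟩
  · intro i hi
    have := congrFun (hg p) i
    simp only [pat, hi, if_false] at this
    change w p i - w (g (pat p)) i = 0
    rw [sub_eq_zero]
    exact this.symm
  · refine hp.trans (le_of_eq ?_)
    congr 2
    ext i
    simp only [mem_filter, and_congr_right_iff]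
    intro _
    change w p i ≠ w (g (pat p)) i ↔ w p i - w (g (pat p)) i ≠ 0
    rw [sub_ne_zero]

open Finset in
lemma iterate_step (F : Type) [Field F] [Fintype F] [DecidableEq F]
    (n k : ℕ) (δ : ℝ) (hn : 1 ≤ n) (hδ : 0 < δ) (hδ1 : δ < 1)
    (v : Fin n → Fin k → F) (H : Fin k → Finset (Finset (Fin n)))
    (hL : IsLinearLDC2 F δ v H) (x : Fin k → F) (m : ℕ) :
    ∃ J : Finset (Fin n), #J ≤ 2 * m ∧
      ∃ y ∈ Submodule.span F (v '' (J : Set (Fin n))),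
        (hammingDist x y : ℝ) ≤ (1 - δ / (Fintype.card F : ℝ)) ^ m * k := by
  classical
  have hq : (1 : ℝ) ≤ (Fintype.card F : ℝ) := by
    exact_mod_cast Fintype.card_pos
  induction m with
  | zero =>
    refine ⟨∅, by simp, 0, Submodule.zero_mem _, ?_⟩
    simpa using hammingDist_le_card_fintype (x := x) (y := (0 : Fin k → F))
  | succ m ih =>
    obtain ⟨J, hJ, y, hy, hd⟩ := ih
    let R : Finset (Fin k) := {i | x i ≠ y i}
    have hR : hammingDist x y = #R := rfl
    obtain ⟨a, b, l, t, hz, hc⟩ := exists_diff F n k δ hn v H hL R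
    set d := l • v a - t • v b with hdd
    have hsum : ∑ s : F, δ * (#R : ℝ) / (Fintype.card F : ℝ) ≤
        ∑ s : F, (#{i ∈ R | s * d i = x i - y i} : ℝ) := by
      have hsw : ∑ s : F, (#{i ∈ R | s * d i = x i - y i} : ℝ) =
          ∑ i ∈ R, (#{s : F | s * d i = x i - y i} : ℝ) := by
        simp only [card_filter, Nat.cast_sum]
        rw [sum_comm]
      rw [hsw]
      calc ∑ s : F, δ * (#R : ℝ) / (Fintype.card F : ℝ) = δ * (#R : ℝ) := by
            simp only [sum_const, card_univ, nsmul_eq_mul]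
            field_simp
        _ ≤ _ := hc
        _ = ∑ i ∈ R, ((if d i ≠ 0 then 1 else 0 : ℕ) : ℝ) := by
            rw [card_filter, Nat.cast_sum]
        _ ≤ _ := by
            apply sum_le_sum
            intro i hi
            split_ifs with h
            · have : 0 < #{s : F | s * d i = x i - y i} :=
                card_pos.2 ⟨(x i - y i) / d i, by simp [h]⟩
              exact_mod_cast this
            · simp
    obtain ⟨s, -, hs⟩ := exists_le_of_sum_le ⟨(0 : F), mem_univ _⟩ hsum
    refine ⟨J ∪ {a, b}, ?_, y + s • d, ?_, ?_⟩
    · have h1 := card_union_le J {a, b}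
      have h2 : #({a, b} : Finset (Fin n)) ≤ 2 := card_le_two
      omega
    · have hsub : v '' (J : Set (Fin n)) ⊆ v '' ((J ∪ {a, b} : Finset (Fin n)) : Set (Fin n)) := by
        apply Set.image_mono
        exact Finset.coe_subset.2 subset_union_left
      refine Submodule.add_mem _ (Submodule.span_mono hsub hy) (Submodule.smul_mem _ _ ?_)
      refine Submodule.sub_mem _ (Submodule.smul_mem _ _ (Submodule.subset_span ?_))
        (Submodule.smul_mem _ _ (Submodule.subset_span ?_))
      · exact ⟨a, by simp, rfl⟩
      · exact ⟨b, by simp, rfl⟩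
    · have hle : hammingDist x (y + s • d) ≤ #{i ∈ R | ¬ (s * d i = x i - y i)} := by
        apply card_le_card
        intro i hi
        have hi' : x i ≠ y i + s * d i := by simpa using hi
        rw [mem_filter]
        constructor
        · by_contra hiR
          have h0 := hz i hiR
          have hxy : x i = y i := by simpa [R] using hiR
          rw [h0, mul_zero, add_zero] at hi'
          exact hi' hxy
        · intro h
          apply hi'
          rw [h]
          ring
      have hsplit := card_filter_add_card_filter_not (s := R) (fun i => s * d i = x i - y i)
      have hle' : (hammingDist x (y + s • d) : ℝ) ≤
          (#{i ∈ R | ¬ (s * d i = x i - y i)} : ℝ) := by exact_mod_cast hle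
      have hsplit' : (#{i ∈ R | s * d i = x i - y i} : ℝ) +
          (#{i ∈ R | ¬ (s * d i = x i - y i)} : ℝ) = (#R : ℝ) := by exact_mod_cast hsplit
      rw [hR] at hd
      have hnn : 0 ≤ 1 - δ / (Fintype.card F : ℝ) := by
        rw [sub_nonneg, div_le_one (by linarith)]
        linarith
      calc (hammingDist x (y + s • d) : ℝ)
          ≤ (#R : ℝ) - δ * (#R : ℝ) / (Fintype.card F : ℝ) := by linarith
        _ = (1 - δ / (Fintype.card F : ℝ)) * (#R : ℝ) := by ring
        _ ≤ (1 - δ / (Fintype.card F : ℝ)) *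
            ((1 - δ / (Fintype.card F : ℝ)) ^ m * k) := by gcongr
        _ = _ := by ring

/-- There is an absolute constant `c > 0` such that for every linear
`(2,δ)`-LDC over a finite field `F` of cardinality `q`, every `x ∈ Fᵏ` is
within Hamming distance `k/4` of the span of at most `c·q·δ⁻¹` of the rows. -/
theorem stmt10 :
    ∃ c : ℝ, 0 < c ∧
      ∀ (F : Type) [Field F] [Fintype F] [DecidableEq F],
        ∀ (n k : ℕ) (δ : ℝ), 1 ≤ n → 0 < δ → δ < 1 →
          ∀ (v : Fin n → Fin k → F) (H : Fin k → Finset (Finset (Fin n))),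
            IsLinearLDC2 F δ v H →
            ∀ x : Fin k → F, ∃ J : Finset (Fin n),
              (J.card : ℝ) ≤ c * (Fintype.card F : ℝ) * δ⁻¹ ∧
              ∃ y ∈ Submodule.span F (v '' (J : Set (Fin n))),
                (hammingDist x y : ℝ) ≤ (k : ℝ) / 4 := by
  refine ⟨6, by norm_num, ?_⟩
  intro F _ _ _ n k δ hn hδ hδ1 v H hL x
  have hq : (1 : ℝ) ≤ (Fintype.card F : ℝ) := by
    exact_mod_cast Fintype.card_pos
  set q : ℝ := (Fintype.card F : ℝ) with hqdef
  have hr : 1 ≤ q * δ⁻¹ := by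
    have : 1 ≤ δ⁻¹ := (one_le_inv₀ hδ).2 hδ1.le
    nlinarith
  obtain ⟨J, hJ, y, hy, hd⟩ :=
    iterate_step F n k δ hn hδ hδ1 v H hL x ⌈2 * (q * δ⁻¹)⌉₊
  have hm1 := Nat.le_ceil (2 * (q * δ⁻¹))
  have hm2 := Nat.ceil_lt_add_one (a := 2 * (q * δ⁻¹)) (by linarith)
  set m := ⌈2 * (q * δ⁻¹)⌉₊
  refine ⟨J, ?_, y, hy, hd.trans ?_⟩
  · have : (J.card : ℝ) ≤ 2 * (m : ℝ) := by exact_mod_cast hJ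
    linarith
  · rw [← hqdef]
    have hnn : 0 ≤ 1 - δ / q := by
      rw [sub_nonneg, div_le_one (by linarith)]
      linarith
    have hexp : (1 - δ / q) ^ m ≤ Real.exp (-2) := by
      calc (1 - δ / q) ^ m ≤ (Real.exp (-(δ / q))) ^ m := by
            gcongr
            exact Real.one_sub_le_exp_neg _
        _ = Real.exp (m * (-(δ / q))) := by rw [Real.exp_nat_mul]
        _ ≤ Real.exp (-2) := by
            apply Real.exp_le_exp.2
            have h1 : 2 * (q * δ⁻¹) * (δ / q) ≤ m * (δ / q) := by gcongr
            have h2 : 2 * (q * δ⁻¹) * (δ / q) = 2 := by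
              have : q ≠ 0 := by linarith
              field_simp
            linarith
    have h4 : Real.exp (-2) ≤ 1 / 4 := by
      have h := Real.add_one_le_exp (1 : ℝ)
      have h' : Real.exp 2 = Real.exp 1 * Real.exp 1 := by
        rw [← Real.exp_add]
        norm_num
      rw [Real.exp_neg, inv_eq_one_div]
      apply one_div_le_one_div_of_le (by norm_num)
      nlinarith
    have hk : (0 : ℝ) ≤ k := Nat.cast_nonneg k
    calc (1 - δ / q) ^ m * k ≤ 1 / 4 * k := by
          gcongr
          linarith
      _ = k / 4 := by ring
end

section
/- For every prime power q and every δ ∈ (0,1) there exists a constant C = C(q,δ) > 0 such that the following holds: if M ∈ F_q^{n×k} (together with matchings H_1,…,H_k) is a linear (2,δ)-LDC over F_q of block length n ≥ 2 and dimension k, then k ≤ C·log₂ n. -/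
open Finset in
theorem ldc_edge_iso {ι E F : Type} [DecidableEq ι] [Fintype F] [DecidableEq F] [Nonempty F] {k : ℕ}
    (w : ι → Fin k → F) (M : Fin k → Finset E) (src tgt : Fin k → E → ι)
    (hs : ∀ i, Set.InjOn (src i) (M i)) (ht : ∀ i, Set.InjOn (tgt i) (M i))
    (hne : ∀ i, ∀ e ∈ M i, w (src i e) i ≠ w (tgt i e) i)
    (heq : ∀ i, ∀ e ∈ M i, ∀ j, j ≠ i → w (src i e) j = w (tgt i e) j)
    (T : Finset (Fin k)) : ∀ S : Finset ι,
    ∑ i ∈ T, (#{e ∈ M i | src i e ∈ S ∧ tgt i e ∈ S} : ℝ) ≤ 2 * (#S * Real.logb 2 #S) := by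
  classical
  induction T using Finset.induction_on with
  | empty =>
    intro S
    have : 0 ≤ Real.logb 2 (#S : ℝ) := by
      rcases Nat.eq_zero_or_pos #S with h | h
      · simp [h]
      · exact Real.logb_nonneg (by norm_num) (by exact_mod_cast h)
    simp only [sum_empty]
    positivity
  | insert j T hj ih =>
    intro S
    rw [sum_insert hj]
    let P : F → Finset ι := fun c => {x ∈ S | w x j = c}
    obtain ⟨c0, -, hc0⟩ := exists_max_image (univ : Finset F) (fun c => #(P c)) univ_nonempty
    have hP : #S = ∑ c, #(P c) := card_eq_sum_card_fiberwise (fun x _ => by simp)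
    have hPR : (#S : ℝ) = ∑ c, (#(P c) : ℝ) := by exact_mod_cast hP
    -- the other directions
    have h1 : ∑ i ∈ T, (#{e ∈ M i | src i e ∈ S ∧ tgt i e ∈ S} : ℝ)
        = ∑ c, ∑ i ∈ T, (#{e ∈ M i | src i e ∈ P c ∧ tgt i e ∈ P c} : ℝ) := by
      rw [sum_comm]
      refine sum_congr rfl fun i hi => ?_
      have hij : j ≠ i := fun h => hj (h ▸ hi)
      rw [card_eq_sum_card_fiberwise (f := fun e => w (src i e) j) (t := univ)
        (fun x _ => by simp)]
      push_cast
      refine sum_congr rfl fun c _ => ?_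
      congr 2
      ext e
      simp only [P, mem_filter]
      constructor
      · rintro ⟨⟨h1, h2, h3⟩, h4⟩
        exact ⟨h1, ⟨h2, h4⟩, h3, by rw [← heq i e h1 j hij]; exact h4⟩
      · rintro ⟨h1, ⟨h2, h4⟩, h3, h5⟩
        exact ⟨⟨h1, h2, h3⟩, h4⟩
    -- direction j
    have h2 : #{e ∈ M j | src j e ∈ S ∧ tgt j e ∈ S} ≤ 2 * #(S \ P c0) := by
      have hsub : ({e ∈ M j | src j e ∈ S ∧ tgt j e ∈ S} : Finset E) ⊆
          {e ∈ M j | src j e ∈ S \ P c0} ∪ {e ∈ M j | tgt j e ∈ S \ P c0} := by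
        intro e he
        simp only [P, mem_filter, mem_union, mem_sdiff] at he ⊢
        have := hne j e he.1
        by_cases h : w (src j e) j = c0
        · right
          refine ⟨he.1, he.2.2, fun h' => this (h.trans h'.2.symm)⟩
        · left
          exact ⟨he.1, he.2.1, fun h' => h h'.2⟩
      have ha : #{e ∈ M j | src j e ∈ S \ P c0} ≤ #(S \ P c0) :=
        card_le_card_of_injOn (src j) (fun e he => (mem_filter.1 he).2)
          ((hs j).mono (fun e he => (mem_filter.1 he).1))
      have hb : #{e ∈ M j | tgt j e ∈ S \ P c0} ≤ #(S \ P c0) :=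
        card_le_card_of_injOn (tgt j) (fun e he => (mem_filter.1 he).2)
          ((ht j).mono (fun e he => (mem_filter.1 he).1))
      have := (card_le_card hsub).trans (card_union_le _ _)
      omega
    have h3 : (#(S \ P c0) : ℝ) = #S - #(P c0) := by
      rw [card_sdiff_of_subset (filter_subset _ _), Nat.cast_sub (card_le_card (filter_subset _ _))]
    have h2R : (#{e ∈ M j | src j e ∈ S ∧ tgt j e ∈ S} : ℝ) ≤ 2 * (#S - #(P c0)) := by
      rw [← h3]; exact_mod_cast h2
    have h4 : ∀ c, (#(P c) : ℝ) * Real.logb 2 #(P c) ≤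
        #(P c) * Real.logb 2 #S - (#(P c) - if c = c0 then (#(P c) : ℝ) else 0) := by
      intro c
      rcases Nat.eq_zero_or_pos #(P c) with h | h
      · simp [h]
      have hpos : (0 : ℝ) < #(P c) := by exact_mod_cast h
      have hle : #(P c) ≤ #S := card_le_card (filter_subset _ _)
      have hS : (0 : ℝ) < #S := by exact_mod_cast h.trans_le hle
      by_cases hc : c = c0
      · simp only [hc, if_true, sub_self, sub_zero]
        rw [hc] at hpos hle
        exact mul_le_mul_of_nonneg_left
          (Real.logb_le_logb_of_le (by norm_num) hpos (by exact_mod_cast hle)) hpos.le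
      · simp only [hc, if_false, sub_zero]
        have hsum : #(P c) + #(P c0) ≤ #S := by
          rw [hP, ← sum_pair (f := fun c => #(P c)) hc]
          exact sum_le_sum_of_subset (subset_univ _)
        have hm := hc0 c (mem_univ _)
        have h2 : (2 : ℝ) * #(P c) ≤ #S := by
          have : 2 * #(P c) ≤ #S := by omega
          exact_mod_cast this
        have hl := Real.logb_le_logb_of_le (b := 2) (by norm_num) (by positivity) h2
        rw [Real.logb_mul (by norm_num) hpos.ne', Real.logb_self_eq_one (by norm_num)] at hl
        nlinarith
    have h5 : ∑ c, (#(P c) : ℝ) * Real.logb 2 #(P c) ≤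
        #S * Real.logb 2 #S - (#S - #(P c0)) := by
      refine (sum_le_sum fun c _ => h4 c).trans (le_of_eq ?_)
      rw [sum_sub_distrib, sum_sub_distrib, ← sum_mul, ← hPR]
      simp
    have h6 : ∑ c, ∑ i ∈ T, (#{e ∈ M i | src i e ∈ P c ∧ tgt i e ∈ P c} : ℝ)
        ≤ 2 * ∑ c, (#(P c) : ℝ) * Real.logb 2 #(P c) := by
      rw [mul_sum]
      exact sum_le_sum fun c _ => ih (P c)
    rw [h1]
    linarith

/-- For every prime power `q` and `δ ∈ (0,1)` there is a constant `C = C(q,δ) > 0`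
such that every linear `(2,δ)`-LDC over a field of cardinality `q`, of block
length `n ≥ 2` and dimension `k`, satisfies `k ≤ C·log₂ n`. -/
theorem stmt11 (q : ℕ) (hq : IsPrimePow q) (δ : ℝ) (hδ0 : 0 < δ) (hδ1 : δ < 1) :
    ∃ C : ℝ, 0 < C ∧
      ∀ (F : Type) [Field F] [Fintype F], Fintype.card F = q →
        ∀ (n k : ℕ), 2 ≤ n →
          ∀ (v : Fin n → Fin k → F) (H : Fin k → Finset (Finset (Fin n))),
            IsLinearLDC2 F δ v H →
            (k : ℝ) ≤ C * Real.logb 2 n := by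
  have hq1 : (1 : ℝ) < q := by exact_mod_cast hq.one_lt
  have hlq : 0 < Real.logb 2 q := Real.logb_pos (by norm_num) hq1
  refine ⟨2 * (Real.logb 2 q + 1) / δ, by positivity, ?_⟩
  intro F _ _ hF n k hn v H ⟨hc, hd, hsz, hdec⟩
  classical
  have ex : ∀ (i : Fin k) (e : Finset (Fin n)), ∃ (a b : Fin n) (α β : Fˣ), e ∈ H i →
      a ∈ e ∧ b ∈ e ∧ (Pi.single i (1 : F) : Fin k → F) = (α : F) • v a + (β : F) • v b := by
    intro i e
    by_cases he : e ∈ H i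
    · obtain ⟨a, b, hab, rfl⟩ := Finset.card_eq_two.1 (hc i e he)
      obtain ⟨α, β, hα, hβ, h⟩ := hdec i _ he a (by simp) b (by simp) hab
      exact ⟨a, b, Units.mk0 α hα, Units.mk0 β hβ, fun _ => ⟨by simp, by simp, h⟩⟩
    · exact ⟨⟨0, by omega⟩, ⟨0, by omega⟩, 1, 1, fun h => absurd h he⟩
  choose a b α β hab using ex
  have huniq : ∀ i, ∀ e ∈ H i, ∀ e' ∈ H i, ∀ x, x ∈ e → x ∈ e' → e = e' := by
    intro i e he e' he' x hx hx'
    by_contra h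
    exact Finset.disjoint_left.1 (hd i e he e' he' h) hx hx'
  have key : ∀ i, ∀ e ∈ H i, ∀ (l : Fˣ) (j : Fin k), (l : F) * v (a i e) j =
      (l : F) * (α i e : F)⁻¹ * (Pi.single i (1 : F) : Fin k → F) j +
        ((-(l * (α i e)⁻¹ * β i e) : Fˣ) : F) * v (b i e) j := by
    intro i e he l j
    have h := congrFun (hab i e he).2.2 j
    simp only [Pi.add_apply, Pi.smul_apply, smul_eq_mul] at h
    rw [h]
    have := (α i e).ne_zero
    push_cast
    field_simp
    ring
  have main := ldc_edge_iso (ι := Fˣ × Fin n) (E := Fˣ × Finset (Fin n)) (F := F)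
    (fun x j => (x.1 : F) * v x.2 j) (fun i => (Finset.univ : Finset Fˣ) ×ˢ H i)
    (fun i e => (e.1, a i e.2))
    (fun i e => (-(e.1 * (α i e.2)⁻¹ * β i e.2), b i e.2))
    (by
      rintro i ⟨l, e⟩ he ⟨l', e'⟩ he' h
      simp only [Finset.coe_product, Set.mem_prod, Finset.mem_coe] at he he'
      simp only [Prod.mk.injEq] at h
      have : e = e' := huniq i e he.2 e' he'.2 _ (hab i e he.2).1 (h.2 ▸ (hab i e' he'.2).1)
      rw [h.1, this])
    (by
      rintro i ⟨l, e⟩ he ⟨l', e'⟩ he' h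
      simp only [Finset.coe_product, Set.mem_prod, Finset.mem_coe] at he he'
      simp only [Prod.mk.injEq] at h
      have : e = e' := huniq i e he.2 e' he'.2 _ (hab i e he.2).2.1 (h.2 ▸ (hab i e' he'.2).2.1)
      subst this
      have h1 := neg_injective h.1
      rw [mul_right_cancel (mul_right_cancel h1)])
    (by
      rintro i ⟨l, e⟩ he
      have he := (Finset.mem_product.1 he).2
      simp only
      rw [key i e he l i]
      simp)
    (by
      rintro i ⟨l, e⟩ he j hj
      have he := (Finset.mem_product.1 he).2
      simp only
      rw [key i e he l j]
      simp [hj])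
    Finset.univ Finset.univ
  simp only [Finset.mem_univ, and_self, Finset.filter_true, Finset.card_product,
    Finset.card_univ, Fintype.card_prod, Fintype.card_fin] at main
  push_cast at main
  set u : ℝ := (Fintype.card Fˣ : ℝ) with hu
  have hu0 : 0 < u := by rw [hu]; exact_mod_cast Fintype.card_pos
  have huq : u ≤ q := by
    rw [hu, ← hF]
    exact_mod_cast Fintype.card_le_of_injective (Units.val : Fˣ → F) Units.val_injective
  have hn2 : (2 : ℝ) ≤ n := by exact_mod_cast hn
  have hn0 : (0 : ℝ) < n := by linarith
  have hlow : (k : ℝ) * (u * (δ * n)) ≤ ∑ i : Fin k, u * ((H i).card : ℝ) := by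
    have : ∑ i : Fin k, u * (δ * n) ≤ ∑ i : Fin k, u * ((H i).card : ℝ) :=
      Finset.sum_le_sum fun i _ => mul_le_mul_of_nonneg_left (hsz i) hu0.le
    simpa using this
  have hln : 1 ≤ Real.logb 2 n := by
    have := Real.logb_le_logb_of_le (b := 2) (by norm_num) (by norm_num) hn2
    rwa [Real.logb_self_eq_one (by norm_num)] at this
  have hlu : Real.logb 2 u ≤ Real.logb 2 q := Real.logb_le_logb_of_le (by norm_num) hu0 huq
  rw [Real.logb_mul hu0.ne' hn0.ne'] at main
  have hun : 0 < u * n := by positivity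
  have h1 : (k : ℝ) * δ ≤ 2 * (Real.logb 2 u + Real.logb 2 n) := by
    refine le_of_mul_le_mul_right ?_ hun
    linarith
  rw [div_mul_eq_mul_div, le_div_iff₀ hδ0]
  nlinarith
end
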